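/- arXiv:1304.7216 — 3 statements merged into one kernel-verified Lean document; each statement's English description precedes it below -/
import Mathlib

section
/- Let Δ ≥ 2 and let G be an infinite, connected, quasi-transitive, Δ-regular simple graph that contains at least one cycle. If σ_n(v)^{1/n} → μ as n → ∞ for some vertex v, then μ < Δ − 1. -/
open Filter

/-- The number of `n`-step self-avoiding walks in `G` starting at `v`. -/
noncomputable def sawCount {V : Type*} (G : SimpleGraph V) (v : V) (n : ℕ) : ℕ :=
  Nat.card {p : Σ w : V, G.Walk v w // p.2.IsPath ∧ p.2.length = n}

/-- Non-backtracking continuation `l` of the directed edge `(a, b)`. -/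
def NBC {V : Type*} (G : SimpleGraph V) : V → V → List V → Prop
  | _, _, [] => True
  | a, b, c :: l => G.Adj b c ∧ c ≠ a ∧ NBC G b c l

open Classical in
/-- The finset of non-backtracking continuations of length `n`. -/
noncomputable def NBF {V : Type*} (nb : V → Finset V) : V → V → ℕ → Finset (List V)
  | _, _, 0 => {[]}
  | a, b, n + 1 => ((nb b).erase a).biUnion fun c => (NBF nb b c n).image (List.cons c)

theorem mem_NBF {V : Type*} (G : SimpleGraph V) (nb : V → Finset V)
    (hnb : ∀ v w, w ∈ nb v ↔ G.Adj v w) (n : ℕ) (a b : V) (l : List V) :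
    l ∈ NBF nb a b n ↔ l.length = n ∧ NBC G a b l := by
  classical
  induction n generalizing a b l with
  | zero => cases l <;> simp [NBF, NBC]
  | succ n ih =>
    cases l with
    | nil => simp [NBF]
    | cons c l =>
      simp only [NBF, NBC, Finset.mem_biUnion, Finset.mem_erase, Finset.mem_image, hnb, ih,
        List.length_cons]
      constructor
      · rintro ⟨c', ⟨h1, h2⟩, l', ⟨h3, h4⟩, h5⟩
        obtain ⟨rfl, rfl⟩ := List.cons.inj h5
        exact ⟨by omega, h2, h1, h4⟩
      · rintro ⟨h0, h1, h2, h3⟩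
        exact ⟨c, ⟨h2, h1⟩, l, ⟨by omega, h3⟩, rfl⟩

theorem card_NBF_le {V : Type*} (G : SimpleGraph V) (nb : V → Finset V) (d : ℕ)
    (hnb : ∀ v w, w ∈ nb v ↔ G.Adj v w) (hd : ∀ v, (nb v).card = d + 1) (n : ℕ) (a b : V)
    (hab : G.Adj a b) : (NBF nb a b n).card ≤ d ^ n := by
  classical
  induction n generalizing a b with
  | zero => simp [NBF]
  | succ n ih =>
    simp only [NBF]
    have h1 : ((nb b).erase a).card = d := by
      rw [Finset.card_erase_of_mem ((hnb b a).2 hab.symm), hd]; rfl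
    refine (Finset.card_biUnion_le_card_mul _ _ (d ^ n) ?_).trans ?_
    · intro c hc
      refine Finset.card_image_le.trans (ih b c ?_)
      exact (hnb b c).1 (Finset.mem_of_mem_erase hc)
    · rw [h1, pow_succ, mul_comm]

theorem NBC_of_path {V : Type*} (G : SimpleGraph V) (l : List V) (a b : V)
    (h1 : List.IsChain G.Adj (b :: l)) (h2 : a ∉ l) (h3 : (b :: l).Nodup) : NBC G a b l := by
  induction l generalizing a b with
  | nil => trivial
  | cons c l ih =>
    rw [List.isChain_cons_cons] at h1
    simp only [List.nodup_cons, List.mem_cons, not_or] at h2 h3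
    exact ⟨h1.1, fun h => h2.1 h.symm, ih b c h1.2 h3.1.2 (List.nodup_cons.2 h3.2)⟩

theorem NBC_step {V : Type*} (G : SimpleGraph V) (d : ℕ) (hd1 : 1 ≤ d) (nb : V → Finset V)
    (hnb : ∀ v w, w ∈ nb v ↔ G.Adj v w) (hd : ∀ v, (nb v).card = d + 1) (a b : V) :
    ∃ c, G.Adj b c ∧ c ≠ a := by
  classical
  obtain ⟨c, hc, hca⟩ := Finset.exists_mem_ne (s := nb b) (by rw [hd]; omega) a
  exact ⟨c, (hnb _ _).1 hc, hca⟩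

theorem NBC_extend {V : Type*} (G : SimpleGraph V)
    (hst : ∀ a b, ∃ c, G.Adj b c ∧ c ≠ a) (l : List V) (a b : V) (h : NBC G a b l) :
    ∃ c, NBC G a b (l ++ [c]) := by
  induction l generalizing a b with
  | nil => obtain ⟨c, h1, h2⟩ := hst a b; exact ⟨c, h1, h2, trivial⟩
  | cons x l ih =>
    obtain ⟨c, hc⟩ := ih b x h.2.2
    exact ⟨c, h.1, h.2.1, hc⟩

theorem bad_extend {V : Type*} (G : SimpleGraph V)
    (hst : ∀ a b, ∃ c, G.Adj b c ∧ c ≠ a) (a b : V) (k : ℕ) (l : List V) (h : NBC G a b l)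
    (hn : ¬ (a :: b :: l).Nodup) :
    ∃ l', l'.length = l.length + k ∧ NBC G a b l' ∧ ¬ (a :: b :: l').Nodup := by
  induction k with
  | zero => exact ⟨l, rfl, h, hn⟩
  | succ k ih =>
    obtain ⟨l', h1, h2, h3⟩ := ih
    obtain ⟨c, hc⟩ := NBC_extend G hst l' a b h2
    refine ⟨l' ++ [c], by simp [h1]; omega, hc, fun h4 => h3 (h4.sublist ?_)⟩
    simp

/-- chains from a good edge -/
def DD {V : Type*} (G : SimpleGraph V) : ℕ → V → V → Prop
  | 0, a, b => G.Adj a b ∧ ∀ l, NBC G a b l → (a :: b :: l).Nodup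
  | k + 1, b, c => ∃ a, DD G k a b ∧ c ≠ a ∧ G.Adj b c

theorem DD_good {V : Type*} (G : SimpleGraph V) (k : ℕ) (a b : V) (h : DD G k a b) :
    G.Adj a b ∧ ∀ l, NBC G a b l → (a :: b :: l).Nodup := by
  induction k generalizing a b with
  | zero => exact h
  | succ k ih =>
    obtain ⟨z, h1, h2, h3⟩ := h
    refine ⟨h3, fun l hl => ?_⟩
    exact ((ih z a h1).2 (b :: l) ⟨h3, h2, hl⟩).of_cons

theorem cyc_bad {V : Type*} (G : SimpleGraph V) (u c : V) (p : G.Walk c c) (hp : p.IsCycle) :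
    ¬ ∀ l, NBC G u c l → (u :: c :: l).Nodup := by
  intro hg
  wlog hs : p.snd ≠ u generalizing p with H
  · refine H p.reverse hp.reverse ?_
    rw [SimpleGraph.Walk.snd_reverse]
    push Not at hs
    rw [← hs]
    exact hp.snd_ne_penultimate.symm
  cases p with
  | nil => exact hp.ne_nil rfl
  | @cons _ z _ hz q =>
    have hq := (SimpleGraph.Walk.cons_isCycle_iff q hz).1 hp
    cases q with
    | nil => exact hz.ne rfl
    | @cons _ y _ hy r =>
      have hyc : y ≠ c := by
        rintro rfl
        apply hq.2
        simp [Sym2.eq_swap]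
      cases r with
      | nil => exact hyc rfl
      | @cons _ x _ hx t =>
      have hch := SimpleGraph.Walk.isChain_adj_support (SimpleGraph.Walk.cons hy (SimpleGraph.Walk.cons hx t))
      have hnd := hq.1.support_nodup
      simp only [SimpleGraph.Walk.support_cons] at hch hnd
      have h2 : NBC G z y t.support := by
        refine NBC_of_path G _ z y (List.isChain_cons_cons.1 hch).2 ?_ hnd.of_cons
        intro h; exact (List.nodup_cons.1 hnd).1 (List.mem_cons_of_mem _ h)
      have h3 := hg (z :: y :: t.support) ⟨hz, by simpa using hs, hy, hyc, h2⟩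
      simp at h3

theorem no_reach {V : Type*} (G : SimpleGraph V) (c : V) (p : G.Walk c c) (hp : p.IsCycle)
    (m k : ℕ) (a b : V) (h : DD G k a b) (hmk : m ≤ k) (q : G.Walk b c) (hq : q.length = m) :
    False := by
  induction m generalizing k a b with
  | zero =>
    cases q with
    | nil => exact cyc_bad G a _ p hp (DD_good G k a _ h).2
    | cons h q => simp at hq
  | succ m ih =>
    cases q with
    | nil => simp at hq
    | @cons _ y _ hy q =>
      simp only [SimpleGraph.Walk.length_cons] at hq
      by_cases hya : y = a
      · subst hya
        obtain ⟨k, rfl⟩ : ∃ k', k = k' + 1 := ⟨k - 1, by omega⟩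
        obtain ⟨z, h1, -, -⟩ := h
        exact ih k z y h1 (by omega) q (by omega)
      · exact ih (k + 1) b y ⟨a, h, hya, hy⟩ (by omega) q (by omega)

theorem DD_all {V : Type*} (G : SimpleGraph V)
    (hst : ∀ a b, ∃ c, G.Adj b c ∧ c ≠ a) (a b : V) (h : DD G 0 a b) (k : ℕ) :
    ∃ a' b', DD G k a' b' := by
  induction k with
  | zero => exact ⟨a, b, h⟩
  | succ k ih =>
    obtain ⟨x, y, hxy⟩ := ih
    obtain ⟨z, h1, h2⟩ := hst x y
    exact ⟨y, z, x, hxy, h2, h1⟩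

theorem no_good {V : Type*} (G : SimpleGraph V)
    (hst : ∀ a b, ∃ c, G.Adj b c ∧ c ≠ a) (hconn : G.Connected)
    (hqt : ∃ W : Finset V, ∀ v : V, ∃ w ∈ W, ∃ γ : G ≃g G, γ v = w)
    (hcycle : ∃ (u : V) (cyc : G.Walk u u), cyc.IsCycle) (a b : V) (hab : G.Adj a b) :
    ∃ l, NBC G a b l ∧ ¬ (a :: b :: l).Nodup := by
  by_contra! hcon
  obtain ⟨W, hW⟩ := hqt
  obtain ⟨u, cyc, hc⟩ := hcycle
  obtain ⟨x, y, hxy⟩ := DD_all G hst a b ⟨hab, hcon⟩ (W.sup fun w => G.dist w u)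
  obtain ⟨w, hw, γ, hγ⟩ := hW y
  obtain ⟨q, hq⟩ := hconn.exists_walk_length_eq_dist w u
  have hyw : γ.symm w = y := by rw [← hγ]; simp
  refine no_reach G (γ.symm u) (cyc.map γ.symm.toHom)
    (hc.map (f := γ.symm.toHom) γ.symm.injective) (G.dist w u) _ x y hxy
    (Finset.le_sup (f := fun w => G.dist w u) hw)
    ((q.map γ.symm.toHom).copy hyw rfl) (by simp [hq])

theorem NBC_map {V : Type*} (G : SimpleGraph V) (γ : G ≃g G) (l : List V) (a b : V)
    (h : NBC G a b l) : NBC G (γ a) (γ b) (l.map γ) := by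
  induction l generalizing a b with
  | nil => trivial
  | cons c l ih =>
    exact ⟨γ.map_adj_iff.2 h.1, fun hh => h.2.1 (γ.injective hh), ih b c h.2.2⟩

theorem unif_bad {V : Type*} (G : SimpleGraph V) (nb : V → Finset V)
    (hnb : ∀ v w, w ∈ nb v ↔ G.Adj v w)
    (hst : ∀ a b, ∃ c, G.Adj b c ∧ c ≠ a) (hconn : G.Connected)
    (hqt : ∃ W : Finset V, ∀ v : V, ∃ w ∈ W, ∃ γ : G ≃g G, γ v = w)
    (hcycle : ∃ (u : V) (cyc : G.Walk u u), cyc.IsCycle) :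
    ∃ N, 1 ≤ N ∧ ∀ a b, G.Adj a b → ∃ l, l.length = N ∧ NBC G a b l ∧ ¬ (a :: b :: l).Nodup := by
  classical
  have hng := no_good G hst hconn hqt hcycle
  choose! f hf1 hf2 using hng
  obtain ⟨W, hW⟩ := hqt
  let g : V → V → ℕ := fun a b => (f a b).length
  refine ⟨(W.sup fun w => (nb w).sup fun b => g w b) + 1, by omega, fun a b hab => ?_⟩
  obtain ⟨w, hw, γ, hγ⟩ := hW a
  have hadj : G.Adj w (γ b) := by rw [← hγ]; exact γ.map_adj_iff.2 hab
  have hle : g w (γ b) ≤ W.sup fun w => (nb w).sup fun b => g w b :=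
    (Finset.le_sup (f := fun b => g w b) ((hnb _ _).2 hadj)).trans
      (Finset.le_sup (f := fun w => (nb w).sup fun b => g w b) hw)
  have hyw : γ.symm w = a := by rw [← hγ]; simp
  have h1 := NBC_map G γ.symm _ _ _ (hf1 _ _ hadj)
  rw [hyw, γ.symm_apply_apply] at h1
  have h2 : ¬ (a :: b :: (f w (γ b)).map γ.symm).Nodup := by
    intro h
    apply hf2 _ _ hadj
    have h' : ((w :: γ b :: f w (γ b)).map γ.symm).Nodup := by
      simpa only [List.map_cons, hyw, γ.symm_apply_apply] using h
    exact h'.of_map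
  obtain ⟨l', e1, e2, e3⟩ := bad_extend G hst a b
    ((W.sup fun w => (nb w).sup fun b => g w b) + 1 - g w (γ b)) _ h1 h2
  refine ⟨l', ?_, e2, e3⟩
  rw [e1, List.length_map]
  change g w (γ b) + _ = _
  omega

open Classical in
/-- self-avoiding continuations -/
noncomputable def SF {V : Type*} (nb : V → Finset V) (a b : V) (n : ℕ) : Finset (List V) :=
  (NBF nb a b n).filter fun l => (a :: b :: l).Nodup

theorem NBC_split {V : Type*} (G : SimpleGraph V) (l : List V) (a b : V) (hab : G.Adj a b)
    (h : NBC G a b l) :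
    ∃ a' b', G.Adj a' b' ∧ ∀ t, NBC G a b (l ++ t) →
      NBC G a' b' t ∧ (a' :: b' :: t).Sublist (a :: b :: (l ++ t)) := by
  induction l generalizing a b with
  | nil => exact ⟨a, b, hab, fun t ht => ⟨ht, List.Sublist.refl _⟩⟩
  | cons c l ih =>
    obtain ⟨a', b', h1, h2⟩ := ih b c h.1 h.2.2
    exact ⟨a', b', h1, fun t ht => ⟨(h2 t ht.2.2).1, (h2 t ht.2.2).2.cons _⟩⟩

theorem NBC_left {V : Type*} (G : SimpleGraph V) (l t : List V) (a b : V)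
    (h : NBC G a b (l ++ t)) : NBC G a b l := by
  induction l generalizing a b with
  | nil => trivial
  | cons c l ih => exact ⟨h.1, h.2.1, ih b c h.2.2⟩

theorem SF_mul {V : Type*} (G : SimpleGraph V) (nb : V → Finset V)
    (hnb : ∀ v w, w ∈ nb v ↔ G.Adj v w) (N n M : ℕ)
    (hM : ∀ a b, G.Adj a b → (SF nb a b n).card ≤ M) (a b : V) (hab : G.Adj a b) :
    (SF nb a b (N + n)).card ≤ M * (SF nb a b N).card := by
  classical
  have hsub : (SF nb a b (N + n)).image (List.take N) ⊆ SF nb a b N := by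
    intro l hl
    obtain ⟨l', h1, rfl⟩ := Finset.mem_image.1 hl
    simp only [SF, Finset.mem_filter, mem_NBF G nb hnb] at h1 ⊢
    obtain ⟨⟨h1, h2⟩, h3⟩ := h1
    refine ⟨⟨by simp [h1], NBC_left G (l'.take N) (l'.drop N) a b (by simpa using h2)⟩, ?_⟩
    exact h3.sublist (((List.take_sublist N l').cons_cons b).cons_cons a)
  refine (Finset.card_le_mul_card_image (f := List.take N) _ M ?_).trans
    (Nat.mul_le_mul_left _ (Finset.card_le_card hsub))
  intro l hl
  have hl' := hsub hl
  simp only [SF, Finset.mem_filter, mem_NBF G nb hnb] at hl'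
  obtain ⟨a', b', hab', H⟩ := NBC_split G l a b hab hl'.1.2
  refine le_trans ?_ (hM a' b' hab')
  refine Finset.card_le_card_of_injOn (List.drop N) ?_ ?_
  · intro x hx
    simp only [SF, Finset.coe_filter, Finset.mem_filter, mem_NBF G nb hnb, Set.mem_ofPred_eq]
      at hx ⊢
    obtain ⟨⟨⟨h1, h2⟩, h3⟩, h4⟩ := hx
    have hx : x = l ++ x.drop N := by rw [← h4]; simp
    rw [hx] at h2 h3
    obtain ⟨e1, e2⟩ := H _ h2
    exact ⟨⟨by simp [h1], e1⟩, h3.sublist e2⟩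
  · intro x hx y hy hxy
    simp only [Finset.coe_filter, Set.mem_ofPred_eq] at hx hy
    rw [← List.take_append_drop N x, ← List.take_append_drop N y, hx.2, hy.2, hxy]

theorem SF_pow {V : Type*} (G : SimpleGraph V) (nb : V → Finset V)
    (hnb : ∀ v w, w ∈ nb v ↔ G.Adj v w) (N q : ℕ)
    (hq : ∀ a b, G.Adj a b → (SF nb a b N).card ≤ q) (k : ℕ) (a b : V) (hab : G.Adj a b) :
    (SF nb a b (N * k)).card ≤ q ^ k := by
  classical
  induction k generalizing a b with
  | zero => exact (Finset.card_filter_le _ _).trans (by simp [NBF])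
  | succ k ih =>
    rw [mul_add, mul_one, add_comm, pow_succ]
    exact (SF_mul G nb hnb N (N * k) (q ^ k) ih a b hab).trans
      (Nat.mul_le_mul_left _ (hq a b hab))

theorem saw_le {V : Type*} (G : SimpleGraph V) (nb : V → Finset V)
    (hnb : ∀ v w, w ∈ nb v ↔ G.Adj v w) (n M D : ℕ) (hD : ∀ v, (nb v).card = D)
    (hM : ∀ a b, G.Adj a b → (SF nb a b n).card ≤ M) (v : V) :
    sawCount G v (n + 1) ≤ D * M := by
  classical
  let T : Finset (List V) :=
    (nb v).biUnion fun b => (SF nb v b n).image fun l => v :: b :: l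
  have hT : T.card ≤ D * M := by
    refine (Finset.card_biUnion_le_card_mul _ _ M ?_).trans (by rw [hD])
    intro b hb
    exact Finset.card_image_le.trans (hM v b ((hnb _ _).1 hb))
  refine le_trans ?_ hT
  rw [sawCount, ← Nat.card_eq_finsetCard T]
  refine Nat.card_le_card_of_injective
    (fun p => (⟨p.1.2.support, ?_⟩ : T)) ?_
  · obtain ⟨⟨w, p⟩, hp, hl⟩ := p
    cases p with
    | nil => simp at hl
    | @cons _ b _ hb p =>
      simp only [SimpleGraph.Walk.length_cons] at hl
      have hnd := hp.support_nodup
      have hch := p.isChain_adj_support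
      have hlen := p.length_support
      simp only [SimpleGraph.Walk.support_cons] at hnd ⊢
      rw [← p.cons_tail_support] at hnd hch hlen ⊢
      simp only [T, Finset.mem_biUnion, Finset.mem_image]
      refine ⟨b, (hnb _ _).2 hb, p.support.tail, ?_, rfl⟩
      simp only [SF, Finset.mem_filter, mem_NBF G nb hnb]
      refine ⟨⟨by simp at hlen ⊢; omega, NBC_of_path G _ v b hch ?_ hnd.of_cons⟩, hnd⟩
      intro h
      exact (List.nodup_cons.1 hnd).1 (List.mem_cons_of_mem _ h)
  · rintro ⟨⟨w, p⟩, hp⟩ ⟨⟨w', p'⟩, hp'⟩ h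
    have h' : p.support = p'.support := by simpa using h
    have hw : w = w' := by
      have e1 := p.getLast_support
      have e2 := p'.getLast_support
      rw [← e1, ← e2]
      congr 1
    subst hw
    have := SimpleGraph.Walk.ext_support h'
    subst this
    rfl

theorem lim_lemma (s : ℕ → ℕ) (N q d D : ℕ) (hN : 1 ≤ N) (hd : 1 ≤ d) (hq : q < d ^ N)
    (hs : ∀ k, s (N * k + 1) ≤ D * q ^ k) (μ : ℝ)
    (hμ : Tendsto (fun n : ℕ => (s n : ℝ) ^ ((1 : ℝ) / n)) atTop (nhds μ)) : μ < d := by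
  by_contra! hcon
  have hd0 : (0 : ℝ) < d := by exact_mod_cast hd
  have hqd : (q : ℝ) < (d : ℝ) ^ N := by exact_mod_cast hq
  obtain ⟨r, hr0, hrd, hqr⟩ : ∃ r : ℝ, 0 < r ∧ r < d ∧ (q : ℝ) < r ^ N := by
    have hc : ∀ᶠ r : ℝ in nhdsWithin (d : ℝ) (Set.Iio d), (q : ℝ) < r ^ N :=
      ((continuous_pow N).tendsto (d : ℝ)).mono_left nhdsWithin_le_nhds |>.eventually
        (lt_mem_nhds hqd)
    have h0 : ∀ᶠ r : ℝ in nhdsWithin (d : ℝ) (Set.Iio d), 0 < r :=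
      (lt_mem_nhds hd0).filter_mono nhdsWithin_le_nhds
    obtain ⟨r, ⟨h1, h2⟩, h3⟩ := ((h0.and hc).and self_mem_nhdsWithin).exists
    exact ⟨r, h1, h3, h2⟩
  have hev : ∀ᶠ n : ℕ in atTop, r < (s n : ℝ) ^ ((1 : ℝ) / n) :=
    hμ.eventually (lt_mem_nhds (hrd.trans_le hcon))
  have hsub : Tendsto (fun k : ℕ => N * k + 1) atTop atTop :=
    tendsto_atTop_mono (fun k => by simp only [id]; nlinarith) tendsto_id
  have hev2 := hsub.eventually hev
  have hrN : 0 < r ^ N := pow_pos hr0 N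
  have hlim : Tendsto (fun k : ℕ => (D : ℝ) * ((q : ℝ) / r ^ N) ^ k) atTop (nhds (D * 0)) :=
    (tendsto_pow_atTop_nhds_zero_of_lt_one (by positivity)
      ((div_lt_one hrN).2 hqr)).const_mul _
  rw [mul_zero] at hlim
  obtain ⟨k, h1, h2⟩ := (hev2.and (hlim.eventually (gt_mem_nhds hr0))).exists
  have h3 : r ^ (N * k + 1) < (s (N * k + 1) : ℝ) := by
    have := pow_lt_pow_left₀ h1 hr0.le (Nat.succ_ne_zero (N * k))
    rwa [one_div, Nat.succ_eq_add_one, Real.rpow_inv_natCast_pow (by positivity) (by omega)] at this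
  have h4 : (s (N * k + 1) : ℝ) ≤ D * (q : ℝ) ^ k := by exact_mod_cast hs k
  rw [div_pow, ← mul_div_assoc, div_lt_iff₀ (pow_pos hrN k)] at h2
  have h5 : r ^ (N * k + 1) = r * (r ^ N) ^ k := by rw [pow_succ, pow_mul, mul_comm]
  linarith

/-- For an infinite, connected, quasi-transitive, `Δ`-regular simple graph with `Δ ≥ 2`
containing a cycle, the connective constant satisfies the strict inequality `μ < Δ − 1`. -/
theorem connective_constant_strict_upper_bound {V : Type*} (G : SimpleGraph V) [Infinite V]
    (Δ : ℕ) (hΔ : 2 ≤ Δ)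
    (hconn : G.Connected)
    (hreg : ∀ v : V, (G.neighborSet v).ncard = Δ)
    (hqt : ∃ W : Finset V, ∀ v : V, ∃ w ∈ W, ∃ γ : G ≃g G, γ v = w)
    (hcycle : ∃ (u : V) (cyc : G.Walk u u), cyc.IsCycle)
    (v : V) (μ : ℝ)
    (hμ : Tendsto (fun n : ℕ => (sawCount G v n : ℝ) ^ ((1 : ℝ) / n)) atTop (nhds μ)) :
    μ < (Δ : ℝ) - 1 := by
  classical
  obtain ⟨d, rfl⟩ : ∃ d, Δ = d + 1 := ⟨Δ - 1, by omega⟩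
  have hfin : ∀ v, (G.neighborSet v).Finite := fun v =>
    Set.finite_of_ncard_ne_zero (by rw [hreg]; omega)
  let nb : V → Finset V := fun v => (hfin v).toFinset
  have hnb : ∀ v w, w ∈ nb v ↔ G.Adj v w := fun v w => by simp [nb]
  have hcard : ∀ v, (nb v).card = d + 1 := fun v => by
    rw [← hreg v, Set.ncard_eq_toFinset_card _ (hfin v)]
  have hst := NBC_step G d (by omega) nb hnb hcard
  obtain ⟨N, hN, hbad⟩ := unif_bad G nb hnb hst hconn hqt hcycle
  have hdN : 0 < d ^ N := Nat.pow_pos (by omega)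
  have hq : ∀ a b, G.Adj a b → (SF nb a b N).card ≤ d ^ N - 1 := by
    intro a b hab
    obtain ⟨l, h1, h2, h3⟩ := hbad a b hab
    have hlt : (SF nb a b N).card < (NBF nb a b N).card := by
      apply Finset.card_lt_card
      refine Finset.filter_ssubset.2 ⟨l, (mem_NBF G nb hnb N a b l).2 ⟨h1, h2⟩, h3⟩
    have := card_NBF_le G nb d hnb hcard N a b hab
    omega
  have := lim_lemma (sawCount G v) N (d ^ N - 1) d (d + 1) hN (by omega) (by omega)
    (fun k => saw_le G nb hnb (N * k) _ _ hcard (SF_pow G nb hnb N _ hq k) v) μ hμ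
  push_cast
  linarith
end

section
/- Let G be an infinite, connected, locally finite, quasi-transitive simple graph, and let v be a vertex. If σ_n(v)^{1/n} → μ as n → ∞, then also σ^F_n(v)^{1/n} → μ as n → ∞; that is, the growth rate of the number of forward-extendable SAWs equals the connective constant. -/
open Filter

/-- The number of forward-extendable `n`-step self-avoiding walks in `G` starting at `v`. -/
noncomputable def fwdSawCount {V : Type*} (G : SimpleGraph V) (v : V) (n : ℕ) : ℕ :=
  Nat.card {p : Σ w : V, G.Walk v w // p.2.IsPath ∧ p.2.length = n ∧
    ∃ f : ℕ → V, Function.Injective f ∧ (∀ i : ℕ, G.Adj (f i) (f (i + 1))) ∧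
      ∀ i : ℕ, i ≤ n → f i = p.2.getVert i}

namespace FE
variable {V : Type*} {G : SimpleGraph V}

def Saw (G : SimpleGraph V) (u : V) (l : List V) : Prop :=
  (u :: l).IsChain G.Adj ∧ (u :: l).Nodup

def S (G : SimpleGraph V) (u : V) (n : ℕ) : Set (List V) := {l | Saw G u l ∧ l.length = n}

def InfSaw (G : SimpleGraph V) (u : V) (f : ℕ → V) : Prop :=
  f 0 = u ∧ Function.Injective f ∧ ∀ i, G.Adj (f i) (f (i + 1))

def pre (f : ℕ → V) (n : ℕ) : List V := (List.range n).map (fun i => f (i + 1))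

def F (G : SimpleGraph V) (u : V) (n : ℕ) : Set (List V) := {l | ∃ f, InfSaw G u f ∧ pre f n = l}

lemma pre_length (f : ℕ → V) (n : ℕ) : (pre f n).length = n := by simp [pre]

lemma pre_succ (f : ℕ → V) (n : ℕ) : pre f (n + 1) = pre f n ++ [f (n + 1)] := by
  simp [pre, List.range_succ]

lemma pre_add (f : ℕ → V) (m n : ℕ) :
    pre f (m + n) = pre f m ++ pre (fun i => f (m + i)) n := by
  simp [pre, List.range_add, Function.comp_def, add_assoc]

lemma pre_last (f : ℕ → V) (n : ℕ) : (pre f n).getLastD (f 0) = f n := by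
  cases n with
  | zero => simp [pre]
  | succ n => rw [pre_succ, List.getLastD_concat]

lemma cons_pre (f : ℕ → V) (n : ℕ) : f 0 :: pre f n = (List.range (n + 1)).map f := by
  simp [pre, List.range_succ_eq_map, Function.comp_def]

lemma saw_pre_iff (f : ℕ → V) (n : ℕ) : Saw G (f 0) (pre f n) ↔
    (∀ i < n, G.Adj (f i) (f (i + 1))) ∧ Set.InjOn f {i | i ≤ n} := by
  unfold Saw
  rw [cons_pre]
  constructor
  · rintro ⟨h1, h2⟩
    constructor
    · intro i hi
      have := List.isChain_iff_getElem.1 h1 i (by simpa using hi)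
      simpa using this
    · intro i hi j hj h
      have := List.inj_on_of_nodup_map h2
      simp only [List.mem_range] at this
      exact this (by simp at hi; omega) (by simp at hj; omega) h
  · rintro ⟨h1, h2⟩
    constructor
    · rw [List.isChain_iff_getElem]
      intro i hi
      simp at hi
      simpa using h1 i hi
    · apply List.Nodup.map_on _ List.nodup_range
      intro x hx y hy h
      simp at hx hy
      exact h2 (by simp; omega) (by simp; omega) h

lemma InfSaw.pre_mem {u : V} {f : ℕ → V} (h : InfSaw G u f) (n : ℕ) : pre f n ∈ S G u n := by
  obtain ⟨h0, h1, h2⟩ := h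
  subst h0
  exact ⟨(saw_pre_iff f n).2 ⟨fun i _ => h2 i, h1.injOn⟩, pre_length f n⟩

lemma infSaw_of_pre {u : V} {f : ℕ → V} (h0 : f 0 = u) (h : ∀ n, Saw G u (pre f n)) :
    InfSaw G u f := by
  subst h0
  refine ⟨rfl, ?_, fun i => ((saw_pre_iff f (i + 1)).1 (h _)).1 i (by omega)⟩
  intro i j hij
  exact ((saw_pre_iff f (i + j)).1 (h _)).2 (by simp) (by simp) hij

lemma InfSaw.shift {u : V} {f : ℕ → V} (h : InfSaw G u f) (m : ℕ) :
    InfSaw G (f m) (fun i => f (m + i)) := by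
  refine ⟨rfl, fun i j hij => ?_, fun i => h.2.2 (m + i)⟩
  have := h.2.1 hij
  omega

lemma Saw.tail {u a : V} {l : List V} (h : Saw G u (a :: l)) : Saw G a l :=
  ⟨(List.isChain_cons_cons.1 h.1).2, (List.nodup_cons.1 h.2).2⟩

lemma Saw.adj {u a : V} {l : List V} (h : Saw G u (a :: l)) : G.Adj u a :=
  (List.isChain_cons_cons.1 h.1).1

lemma Saw.left {u : V} {l m : List V} (h : Saw G u (l ++ m)) : Saw G u l := by
  refine ⟨List.IsChain.left_of_append (l₂ := m) (by simpa using h.1), ?_⟩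
  exact List.Nodup.of_append_left (l₂ := m) (by simpa using h.2)

lemma Saw.right {u : V} {l m : List V} (h : Saw G u (l ++ m)) : Saw G (l.getLastD u) m := by
  induction l generalizing u with
  | nil => simpa using h
  | cons a l ih =>
    rw [List.getLastD_cons]
    exact ih (Saw.tail (by simpa using h))

lemma Saw.prefix {u : V} {l m : List V} (h : Saw G u m) (hl : l <+: m) : Saw G u l := by
  obtain ⟨r, rfl⟩ := hl
  exact h.left

lemma S_finite (hlf : ∀ v : V, (G.neighborSet v).Finite) (n : ℕ) :
    ∀ u, (S G u n).Finite := by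
  induction n with
  | zero =>
    intro u
    apply (Set.finite_singleton ([] : List V)).subset
    rintro l ⟨-, hl⟩
    simpa using hl
  | succ n ih =>
    intro u
    apply ((hlf u).biUnion (t := fun a => (a :: ·) '' S G a n) fun a _ => (ih a).image _).subset
    rintro l ⟨h, hl⟩
    cases l with
    | nil => simp at hl
    | cons a l =>
      simp only [Set.mem_iUnion]
      exact ⟨a, h.adj, l, ⟨h.tail, by simpa using hl⟩, rfl⟩

lemma F_subset (u : V) (n : ℕ) : F G u n ⊆ S G u n := by
  rintro l ⟨f, hf, rfl⟩
  exact hf.pre_mem n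

lemma iso_le (hlf : ∀ v : V, (G.neighborSet v).Finite) (γ : G ≃g G) (u : V) (n : ℕ) :
    (S G u n).ncard ≤ (S G (γ u) n).ncard := by
  apply Set.ncard_le_ncard_of_injOn (List.map γ) _ _ (S_finite hlf n _)
  · rintro l ⟨h, hl⟩
    refine ⟨⟨?_, ?_⟩, by simpa using hl⟩
    · rw [← List.map_cons, List.isChain_map]
      exact h.1.imp fun a b hab => γ.map_adj_iff.2 hab
    · rw [← List.map_cons]
      exact h.2.map γ.injective
  · exact (List.map_injective_iff.2 γ.injective).injOn

/-- König-type compactness. -/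
lemma konig (hlf : ∀ v : V, (G.neighborSet v).Finite) (u : V) (Q : Set (List V))
    (hQ : ∀ f, InfSaw G u f → ∃ n, pre f n ∈ Q) :
    ∃ N, ∀ l ∈ S G u N, ∃ p ∈ Q, p <+: l := by
  by_contra! hcon
  let B : Set (List V) := {l | Saw G u l ∧ ∀ p ∈ Q, ¬ p <+: l}
  let E : List V → Prop := fun l => ∀ m : ℕ, ∃ l' ∈ B, l <+: l' ∧ m ≤ l'.length
  have hEB : ∀ l, E l → l ∈ B := by
    intro l hl
    obtain ⟨l', hB, hp, -⟩ := hl 0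
    exact ⟨hB.1.prefix hp, fun p hpQ hpl => hB.2 p hpQ (hpl.trans hp)⟩
  have hE0 : E [] := by
    intro m
    obtain ⟨l, hl, h⟩ := hcon m
    exact ⟨l, ⟨hl.1, h⟩, List.nil_prefix, hl.2.ge⟩
  have hstep : ∀ l, E l → ∃ a, E (l ++ [a]) := by
    intro l hl
    by_contra! hno
    simp only [E, not_forall] at hno
    choose m hm using hno
    obtain ⟨M, hM⟩ := ((hlf (l.getLastD u)).image m).bddAbove
    obtain ⟨l', hB, ⟨r, rfl⟩, hlen⟩ := hl (M + l.length + 1)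
    cases r with
    | nil => simp at hlen
    | cons a r =>
      have hadj : G.Adj (l.getLastD u) a := hB.1.right.adj
      apply hm a
      have : m a ≤ M := hM ⟨a, hadj, rfl⟩
      exact ⟨_, hB, ⟨r, by simp⟩, by omega⟩
  have : Nonempty V := ⟨u⟩
  choose! nx hnx using hstep
  let s : ℕ → List V := fun n => Nat.rec [] (fun _ l => l ++ [nx l]) n
  have hs : ∀ n, s (n + 1) = s n ++ [nx (s n)] := fun n => rfl
  have hsE : ∀ n, E (s n) := by
    intro n
    induction n with
    | zero => exact hE0
    | succ n ih => rw [hs]; exact hnx _ ih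
  let f : ℕ → V := fun n => Nat.casesOn n u (fun k => nx (s k))
  have hf : ∀ n, pre f n = s n := by
    intro n
    induction n with
    | zero => rfl
    | succ n ih => rw [pre_succ, hs, ih]
  have hinf : InfSaw G u f := by
    apply infSaw_of_pre rfl
    intro n
    rw [hf]
    exact (hEB _ (hsE n)).1
  obtain ⟨n, hn⟩ := hQ f hinf
  rw [hf] at hn
  exact (hEB _ (hsE n)).2 _ hn List.prefix_rfl

lemma ncard_biUnion_mul {α β : Type*} {s : Set α} (hs : s.Finite) (t : α → Set β) (K : ℝ)
    (h : ∀ a ∈ s, ((t a).ncard : ℝ) ≤ K) : ((⋃ a ∈ s, t a).ncard : ℝ) ≤ s.ncard * K := by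
  have h1 := Finset.set_ncard_biUnion_le hs.toFinset t
  simp only [Set.Finite.mem_toFinset] at h1
  calc ((⋃ a ∈ s, t a).ncard : ℝ) ≤ ∑ a ∈ hs.toFinset, ((t a).ncard : ℝ) := by exact_mod_cast h1
    _ ≤ ∑ a ∈ hs.toFinset, K := Finset.sum_le_sum fun a ha => h a (by simpa using ha)
    _ = _ := by rw [Finset.sum_const, nsmul_eq_mul, Set.ncard_eq_toFinset_card _ hs]

/-- Cut structure at `u`. -/
def Cut (G : SimpleGraph V) (lam : ℝ) (u : V) : Prop :=
  ∃ (N : ℕ) (L : ℕ → ℕ) (Q : ℕ → Set (List V)),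
    (∀ m, (Q m).Finite) ∧ (∀ m, 1 ≤ L m) ∧ (∀ m, ∀ p ∈ Q m, p.length = L m) ∧
    (∑ m ∈ Finset.range (N + 1), ((Q m).ncard : ℝ) * (lam ^ (L m))⁻¹ ≤ 1) ∧
    ∀ l ∈ S G u N, ∃ m ∈ Finset.range (N + 1), ∃ p ∈ Q m, p <+: l

lemma growth (hlf : ∀ v : V, (G.neighborSet v).Finite) (W : Finset V)
    (hW : ∀ v : V, ∃ w ∈ W, ∃ γ : G ≃g G, γ v = w) (lam : ℝ) (hlam : 0 < lam)
    (hcut : ∀ u, Cut G lam u) :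
    ∃ C : ℝ, 0 < C ∧ ∀ n u, ((S G u n).ncard : ℝ) ≤ C * lam ^ n := by
  choose N L Q hfin hL hlen hsum hpre using hcut
  let T : V → ℝ := fun u => ∑ n ∈ Finset.range (N u), ((S G u n).ncard : ℝ) / lam ^ n
  have hT0 : ∀ u, 0 ≤ T u := fun u => Finset.sum_nonneg fun n _ => by positivity
  obtain ⟨C, hC⟩ : ∃ C : ℝ, C = ∑ u ∈ W, T u + 1 := ⟨_, rfl⟩
  have hC0 : 0 < C := by have := Finset.sum_nonneg (fun u (_ : u ∈ W) => hT0 u); linarith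
  refine ⟨C, hC0, ?_⟩
  intro n
  induction n using Nat.strong_induction_on with
  | _ n ih =>
  intro u'
  obtain ⟨u, hu, γ, hγ⟩ := hW u'
  have hle : ((S G u' n).ncard : ℝ) ≤ (S G u n).ncard := by
    have := iso_le hlf γ u' n
    rw [hγ] at this
    exact_mod_cast this
  refine hle.trans ?_
  by_cases hn : n < N u
  · have h1 : ((S G u n).ncard : ℝ) / lam ^ n ≤ T u :=
      Finset.single_le_sum (f := fun n => ((S G u n).ncard : ℝ) / lam ^ n)
        (fun n _ => by positivity) (Finset.mem_range.2 hn)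
    have h2 : T u ≤ ∑ u ∈ W, T u := Finset.single_le_sum (fun u _ => hT0 u) hu
    rw [← div_le_iff₀ (by positivity)]
    linarith
  · push Not at hn
    have hsub : S G u n ⊆ ⋃ m ∈ Finset.range (N u + 1),
        (⋃ p ∈ Q u m, {l | l ∈ S G u n ∧ p <+: l}) := by
      intro l hl
      have : l.take (N u) ∈ S G u (N u) :=
        ⟨hl.1.prefix (List.take_prefix _ _), by rw [List.length_take, hl.2]; omega⟩
      obtain ⟨m, hm, p, hp, hpl⟩ := hpre u _ this
      simp only [Set.mem_iUnion]
      exact ⟨m, hm, p, hp, hl, hpl.trans (List.take_prefix _ _)⟩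
    have hfinS := S_finite hlf n u
    have h1 : (S G u n).ncard ≤ ∑ m ∈ Finset.range (N u + 1),
        (⋃ p ∈ Q u m, {l | l ∈ S G u n ∧ p <+: l}).ncard := by
      refine le_trans (Set.ncard_le_ncard hsub ?_) (Finset.set_ncard_biUnion_le _ _)
      refine hfinS.subset ?_
      intro l hl
      simp only [Set.mem_iUnion] at hl
      obtain ⟨m, hm, p, hp, hl, -⟩ := hl
      exact hl
    have h2 : ∀ m, ((⋃ p ∈ Q u m, {l | l ∈ S G u n ∧ p <+: l}).ncard : ℝ) ≤
        (Q u m).ncard * (C * lam ^ n * (lam ^ (L u m))⁻¹) := by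
      intro m
      apply ncard_biUnion_mul (hfin u m)
      intro p hp
      by_cases hLn : L u m ≤ n
      · have hlt : n - L u m < n := by have := hL u m; omega
        have h3 := ih (n - L u m) hlt (p.getLastD u)
        have h4 : C * lam ^ n * (lam ^ (L u m))⁻¹ = C * lam ^ (n - L u m) := by
          rw [pow_sub₀ _ hlam.ne' hLn]; ring
        rw [h4]
        refine le_trans ?_ h3
        have : {l | l ∈ S G u n ∧ p <+: l} ⊆ (p ++ ·) '' S G (p.getLastD u) (n - L u m) := by
          rintro l ⟨hl, r, rfl⟩
          refine ⟨r, ⟨hl.1.right, ?_⟩, rfl⟩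
          have := hl.2
          rw [List.length_append, hlen u m p hp] at this
          omega
        have hf := S_finite hlf (n - L u m) (p.getLastD u)
        exact_mod_cast (Set.ncard_le_ncard this (hf.image _)).trans (Set.ncard_image_le hf)
      · have : {l | l ∈ S G u n ∧ p <+: l} = ∅ := by
          ext l
          simp only [Set.mem_ofPred_eq, Set.mem_empty_iff_false, iff_false]
          rintro ⟨hl, hpl⟩
          have h5 := hpl.length_le
          rw [hlen u m p hp, hl.2] at h5
          omega
        rw [this]
        simp only [Set.ncard_empty, Nat.cast_zero]
        positivity
    calc ((S G u n).ncard : ℝ) ≤ ∑ m ∈ Finset.range (N u + 1),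
        ((⋃ p ∈ Q u m, {l | l ∈ S G u n ∧ p <+: l}).ncard : ℝ) := by exact_mod_cast h1
      _ ≤ ∑ m ∈ Finset.range (N u + 1), (Q u m).ncard * (C * lam ^ n * (lam ^ (L u m))⁻¹) :=
        Finset.sum_le_sum fun m _ => h2 m
      _ = C * lam ^ n * ∑ m ∈ Finset.range (N u + 1), ((Q u m).ncard : ℝ) * (lam ^ (L u m))⁻¹ := by
        rw [Finset.mul_sum]; exact Finset.sum_congr rfl fun m _ => by ring
      _ ≤ C * lam ^ n * 1 := mul_le_mul_of_nonneg_left (hsum u) (by positivity)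
      _ = _ := mul_one _

lemma cut (hconn : G.Connected) (hlf : ∀ v : V, (G.neighborSet v).Finite) (v u : V)
    (lam' lam : ℝ) (h0 : 0 < lam') (hlt : lam' < lam)
    (hfreq : ∃ᶠ n in atTop, ((F G v n).ncard : ℝ) ≤ lam' ^ n) : Cut G lam u := by
  have hlam : 0 < lam := h0.trans hlt
  obtain ⟨p, d, hp0, hpd, hpinj, hpadj⟩ : ∃ (p : ℕ → V) (d : ℕ), p 0 = v ∧ p d = u ∧
      Set.InjOn p {i | i ≤ d} ∧ ∀ i < d, G.Adj (p i) (p (i + 1)) := by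
    obtain ⟨w, hw⟩ := (hconn.preconnected v u).exists_isPath
    exact ⟨w.getVert, w.length, by simp, by simp, hw.getVert_injOn,
      fun i hi => w.adj_getVert_succ hi⟩
  set P : Set V := p '' {i | i ≤ d} with hP
  have hPfin : P.Finite := (Set.finite_le_nat d).image p
  let A : V → ℕ → Set (List V) := fun x n =>
    {q | ∃ g, InfSaw G x g ∧ (∀ i, 1 ≤ i → g i ∉ P) ∧ pre g n = q}
  have hAfin : ∀ x n, (A x n).Finite := by
    intro x n
    refine (S_finite hlf n x).subset ?_
    rintro q ⟨g, hg, -, rfl⟩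
    exact hg.pre_mem n
  have hFfin : ∀ n, (F G v n).Finite := fun n => (S_finite hlf n v).subset (F_subset v n)
  have hA : ∀ x ∈ P, ∀ n, (A x n).ncard ≤ (F G v (n + d)).ncard := by
    rintro x ⟨j, hj, rfl⟩ n
    simp only [Set.mem_ofPred_eq] at hj
    have hsub : A (p j) n ⊆ (fun l => (l.drop j).take n) '' F G v (n + d) := by
      rintro q ⟨g, hg, hgP, rfl⟩
      let h : ℕ → V := fun i => if i < j then p i else g (i - j)
      have hh1 : ∀ i, i ≤ j → h i = p i := by
        intro i hi
        rcases hi.lt_or_eq with hi | rfl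
        · simp [h, hi]
        · simp [h, hg.1]
      have hh2 : ∀ i, h (j + i) = g i := by intro i; simp [h]
      refine ⟨pre h (n + d), ⟨h, ⟨?_, ?_, ?_⟩, rfl⟩, ?_⟩
      · rw [hh1 0 (by omega), hp0]
      · have key : ∀ a b, a ≤ j → j < b → h a ≠ h b := by
          intro a b ha hb hab
          obtain ⟨c, rfl⟩ := Nat.exists_eq_add_of_lt hb
          rw [hh1 a ha, add_assoc, hh2] at hab
          exact hgP (c + 1) (by omega) ⟨a, by simp; omega, hab⟩
        intro a b hab
        rcases le_or_gt a j with ha | ha <;> rcases le_or_gt b j with hb | hb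
        · rw [hh1 a ha, hh1 b hb] at hab
          exact hpinj (by simp; omega) (by simp; omega) hab
        · exact absurd hab (key a b ha hb)
        · exact absurd hab.symm (key b a hb ha)
        · obtain ⟨c, rfl⟩ := Nat.exists_eq_add_of_le ha.le
          obtain ⟨e, rfl⟩ := Nat.exists_eq_add_of_le hb.le
          rw [hh2, hh2] at hab
          rw [hg.2.1 hab]
      · intro i
        rcases lt_or_ge i j with hi | hi
        · rw [hh1 i hi.le, hh1 (i + 1) hi]
          exact hpadj i (by omega)
        · obtain ⟨c, rfl⟩ := Nat.exists_eq_add_of_le hi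
          rw [add_assoc, hh2, hh2]
          exact hg.2.2 c
      · have e : n + d = j + (n + (d - j)) := by omega
        have e2 : (fun i => h (j + i)) = g := funext hh2
        simp only [e, pre_add h j, e2, pre_add g n]
        rw [List.drop_left' (pre_length h j), List.take_left' (pre_length g n)]
    exact (Set.ncard_le_ncard hsub ((hFfin _).image _)).trans (Set.ncard_image_le (hFfin _))
  have hk : ∀ m : ℕ, ∃ k : ℕ, 1 ≤ k ∧ ((S G u m).ncard : ℝ) * (F G v (k + d)).ncard *
      (lam ^ (m + k))⁻¹ ≤ (1 / 2) ^ (m + 1) := by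
    intro m
    set c : ℝ := ((S G u m).ncard : ℝ) * lam ^ d * (lam ^ m)⁻¹ with hc
    have hc0 : 0 ≤ c := by positivity
    have ht : Tendsto (fun M : ℕ => c * (lam' / lam) ^ M) atTop (nhds 0) := by
      have := (tendsto_pow_atTop_nhds_zero_of_lt_one (r := lam' / lam) (by positivity)
        ((div_lt_one hlam).2 hlt)).const_mul c
      simpa using this
    have hev : ∀ᶠ M : ℕ in atTop, c * (lam' / lam) ^ M < (1 / 2) ^ (m + 1) :=
      ht.eventually_lt_const (by positivity)
    obtain ⟨M, hM1, hM2, hM3⟩ := (hfreq.and_eventually (hev.and (eventually_ge_atTop (d + 1)))).exists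
    obtain ⟨k, rfl⟩ := Nat.exists_eq_add_of_le hM3
    refine ⟨k + 1, by omega, ?_⟩
    have e : k + 1 + d = d + 1 + k := by omega
    rw [e]
    refine le_trans ?_ hM2.le
    calc ((S G u m).ncard : ℝ) * (F G v (d + 1 + k)).ncard * (lam ^ (m + (k + 1)))⁻¹
        ≤ ((S G u m).ncard : ℝ) * lam' ^ (d + 1 + k) * (lam ^ (m + (k + 1)))⁻¹ := by
          apply mul_le_mul_of_nonneg_right _ (by positivity)
          exact mul_le_mul_of_nonneg_left hM1 (by positivity)
      _ = _ := by
          rw [hc, div_pow]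
          field_simp
          ring
  choose k hk1 hk2 using hk
  let R : ℕ → Set (List V) := fun m => {w | w ∈ S G u m ∧ w.getLastD u ∈ P}
  have hRfin : ∀ m, (R m).Finite := fun m => (S_finite hlf m u).subset fun w hw => hw.1
  let Q : ℕ → Set (List V) := fun m => ⋃ w ∈ R m, (w ++ ·) '' A (w.getLastD u) (k m)
  have hcov : ∀ f, InfSaw G u f → ∃ n, pre f n ∈ ⋃ m, Q m := by
    intro f hf
    have hfin : {i | f i ∈ P}.Finite := hPfin.preimage hf.2.1.injOn
    have h0 : (0 : ℕ) ∈ {i | f i ∈ P} := by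
      simp only [Set.mem_ofPred_eq]
      exact ⟨d, by simp, by rw [hpd, hf.1]⟩
    obtain ⟨m, hm, hmax⟩ := hfin.exists_maximalFor id _ ⟨0, h0⟩
    have hl : (pre f m).getLastD u = f m := by rw [← hf.1]; exact pre_last f m
    refine ⟨m + k m, ?_⟩
    simp only [Set.mem_iUnion, Q]
    refine ⟨m, pre f m, ⟨hf.pre_mem m, by rw [hl]; exact hm⟩, pre (fun i => f (m + i)) (k m), ?_,
      (pre_add f m _).symm⟩
    rw [hl]
    refine ⟨_, hf.shift m, ?_, rfl⟩
    intro i hi hmem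
    have := hmax (j := m + i) hmem (by simp)
    simp at this
    omega
  obtain ⟨N, hN⟩ := konig hlf u _ hcov
  have hlenQ : ∀ m, ∀ p ∈ Q m, p.length = m + k m := by
    intro m q hq
    simp only [Set.mem_iUnion, Q] at hq
    obtain ⟨w, hw, r, ⟨g, hg, -, rfl⟩, rfl⟩ := hq
    simp [hw.1.2, pre_length]
  refine ⟨N, fun m => m + k m, Q, ?_, fun m => (hk1 m).trans (Nat.le_add_left _ _), hlenQ, ?_, ?_⟩
  · intro m
    exact (hRfin m).biUnion fun w _ => (hAfin _ _).image _
  · have h1 : ∀ m, ((Q m).ncard : ℝ) * (lam ^ (m + k m))⁻¹ ≤ (1 / 2) ^ (m + 1) := by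
      intro m
      refine le_trans (mul_le_mul_of_nonneg_right ?_ (by positivity)) (hk2 m)
      refine (ncard_biUnion_mul (hRfin m) _ ((F G v (k m + d)).ncard : ℝ) ?_).trans ?_
      · intro w hw
        exact_mod_cast (Set.ncard_image_le (hAfin _ _)).trans (hA _ hw.2 _)
      · apply mul_le_mul_of_nonneg_right _ (by positivity)
        exact_mod_cast Set.ncard_le_ncard (s := R m) (t := S G u m) (fun w hw => hw.1) (S_finite hlf m u)
    refine (Finset.sum_le_sum fun m _ => h1 m).trans ?_
    have h2 : ∀ n : ℕ, ∑ m ∈ Finset.range n, (1 / 2 : ℝ) ^ (m + 1) = 1 - (1 / 2) ^ n := by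
      intro n
      induction n with
      | zero => simp
      | succ n ih => rw [Finset.sum_range_succ, ih]; ring
    rw [h2]
    have : (0 : ℝ) ≤ (1 / 2) ^ (N + 1) := by positivity
    linarith
  · intro l hl
    obtain ⟨q, hq, hql⟩ := hN l hl
    obtain ⟨m, hm⟩ := Set.mem_iUnion.1 hq
    refine ⟨m, ?_, q, hm, hql⟩
    have h1 := hlenQ m q hm
    have h2 := hql.length_le
    rw [hl.2] at h2
    rw [Finset.mem_range]
    omega

/-- The list of a walk. -/
def toL {v : V} (p : Σ w : V, G.Walk v w) : List V := p.2.support.tail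

lemma cons_toL {v : V} (p : Σ w : V, G.Walk v w) : v :: toL p = p.2.support := by
  simp [toL, SimpleGraph.Walk.cons_tail_support]

lemma toL_inj {v : V} : Function.Injective (toL (G := G) (v := v)) := by
  rintro ⟨w, p⟩ ⟨w', p'⟩ h
  have h' : p.support = p'.support := by rw [← cons_toL ⟨w, p⟩, ← cons_toL ⟨w', p'⟩, h]
  have hw : w = w' := by
    have h1 := p.getLast_support
    have h2 := p'.getLast_support
    rw [← h1, ← h2]
    congr 1
  subst hw
  rw [SimpleGraph.Walk.ext_support h']

lemma toL_mem {v : V} {n : ℕ} {p : Σ w : V, G.Walk v w} (h : p.2.IsPath) (hn : p.2.length = n) :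
    toL p ∈ S G v n := by
  refine ⟨⟨?_, ?_⟩, ?_⟩
  · rw [cons_toL]; exact p.2.isChain_adj_support
  · rw [cons_toL]; exact h.support_nodup
  · simp [toL, hn]

lemma saw_fin (hlf : ∀ v : V, (G.neighborSet v).Finite) (v : V) (n : ℕ) :
    {p : Σ w : V, G.Walk v w | p.2.IsPath ∧ p.2.length = n}.Finite := by
  apply Set.Finite.of_injOn (f := toL) (t := S G v n) _ toL_inj.injOn (S_finite hlf n v)
  rintro p ⟨h1, h2⟩
  exact toL_mem h1 h2

lemma sawCount_le (hlf : ∀ v : V, (G.neighborSet v).Finite) (v : V) (n : ℕ) :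
    sawCount G v n ≤ (S G v n).ncard := by
  have : sawCount G v n = {p : Σ w : V, G.Walk v w | p.2.IsPath ∧ p.2.length = n}.ncard := rfl
  rw [this]
  apply Set.ncard_le_ncard_of_injOn toL _ toL_inj.injOn (S_finite hlf n v)
  rintro p ⟨h1, h2⟩
  exact toL_mem h1 h2

lemma fwd_le (hlf : ∀ v : V, (G.neighborSet v).Finite) (v : V) (n : ℕ) :
    fwdSawCount G v n ≤ sawCount G v n :=
  Set.ncard_le_ncard (s := {p : Σ w : V, G.Walk v w | p.2.IsPath ∧ p.2.length = n ∧
    ∃ f : ℕ → V, Function.Injective f ∧ (∀ i : ℕ, G.Adj (f i) (f (i + 1))) ∧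
      ∀ i : ℕ, i ≤ n → f i = p.2.getVert i})
      (t := {p : Σ w : V, G.Walk v w | p.2.IsPath ∧ p.2.length = n})
      (fun _ h => ⟨h.1, h.2.1⟩) (saw_fin hlf v n)

lemma exists_walk (n : ℕ) : ∀ f : ℕ → V, (∀ i : ℕ, G.Adj (f i) (f (i + 1))) →
    ∃ w : G.Walk (f 0) (f n), w.length = n ∧ w.support = (List.range (n + 1)).map f ∧
      ∀ i ≤ n, f i = w.getVert i := by
  induction n with
  | zero =>
    intro f hf
    exact ⟨SimpleGraph.Walk.nil, rfl, by simp, fun i hi => by simp at hi; simp [hi]⟩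
  | succ n ih =>
    intro f hf
    obtain ⟨w, h1, h2, h3⟩ := ih (fun i => f (i + 1)) (fun i => hf (i + 1))
    refine ⟨SimpleGraph.Walk.cons (hf 0) w, by simp [h1], ?_, ?_⟩
    · rw [SimpleGraph.Walk.support_cons, h2, List.range_succ_eq_map (n := n + 1)]
      simp
    · intro i hi
      cases i with
      | zero => simp
      | succ i => simpa using h3 i (by omega)

lemma le_fwd (hlf : ∀ v : V, (G.neighborSet v).Finite) (v : V) (n : ℕ) :
    (F G v n).ncard ≤ fwdSawCount G v n := by
  set T := {p : Σ w : V, G.Walk v w | p.2.IsPath ∧ p.2.length = n ∧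
    ∃ f : ℕ → V, Function.Injective f ∧ (∀ i : ℕ, G.Adj (f i) (f (i + 1))) ∧
      ∀ i : ℕ, i ≤ n → f i = p.2.getVert i} with hT
  have e : fwdSawCount G v n = T.ncard := rfl
  have hfin : T.Finite := (saw_fin hlf v n).subset fun _ h => ⟨h.1, h.2.1⟩
  rw [e]
  have hsub : F G v n ⊆ toL '' T := by
    rintro l ⟨f, ⟨rfl, hf1, hf2⟩, rfl⟩
    obtain ⟨w, h1, h2, h3⟩ := exists_walk n f hf2
    refine ⟨⟨f n, w⟩, ⟨?_, h1, f, hf1, hf2, h3⟩, ?_⟩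
    · rw [SimpleGraph.Walk.isPath_def]
      simp only [h2]
      exact List.nodup_range.map hf1
    · simp only [toL]
      rw [h2, ← cons_pre, List.tail_cons]
  exact (Set.ncard_le_ncard hsub (hfin.image _)).trans (Set.ncard_image_le hfin)

end FE

/-- For an infinite, connected, locally finite, quasi-transitive simple graph, the growth
rate of the number of forward-extendable SAWs equals the connective constant. -/
theorem forward_extendable_growth_rate {V : Type*} (G : SimpleGraph V) [Infinite V]
    (hconn : G.Connected)
    (hlf : ∀ v : V, (G.neighborSet v).Finite)
    (hqt : ∃ W : Finset V, ∀ v : V, ∃ w ∈ W, ∃ γ : G ≃g G, γ v = w)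
    (v : V) (μ : ℝ)
    (hμ : Tendsto (fun n : ℕ => (sawCount G v n : ℝ) ^ ((1 : ℝ) / n)) atTop (nhds μ)) :
    Tendsto (fun n : ℕ => (fwdSawCount G v n : ℝ) ^ ((1 : ℝ) / n)) atTop (nhds μ) := by
  have hle : ∀ n : ℕ, (fwdSawCount G v n : ℝ) ^ ((1 : ℝ) / n) ≤
      (sawCount G v n : ℝ) ^ ((1 : ℝ) / n) := by
    intro n
    apply Real.rpow_le_rpow (by positivity) _ (by positivity)
    exact_mod_cast FE.fwd_le hlf v n
  rw [tendsto_order]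
  constructor
  · intro a ha
    rcases lt_or_ge a 0 with ha0 | ha0
    · exact Eventually.of_forall fun n => ha0.trans_le (by positivity)
    obtain ⟨lam', h1, h2⟩ := exists_between ha
    obtain ⟨lam, h3, h4⟩ := exists_between h2
    have hl' : 0 < lam' := ha0.trans_lt h1
    have hl : 0 < lam := hl'.trans h3
    have hev : ∀ᶠ n in atTop, lam' ^ n < ((FE.F G v n).ncard : ℝ) := by
      by_contra hcon
      have hfreq : ∃ᶠ n in atTop, ((FE.F G v n).ncard : ℝ) ≤ lam' ^ n := by
        rw [Filter.not_eventually] at hcon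
        exact hcon.mono fun n hn => not_lt.1 hn
      obtain ⟨W, hW⟩ := hqt
      obtain ⟨C, hC, hb⟩ := FE.growth hlf W hW lam hl
        (fun u => FE.cut hconn hlf v u lam' lam hl' h3 hfreq)
      have hlim : Tendsto (fun n : ℕ => C ^ ((1 : ℝ) / n) * lam) atTop (nhds lam) := by
        have h5 : Tendsto (fun n : ℕ => C ^ ((1 : ℝ) / n)) atTop (nhds (C ^ (0 : ℝ))) :=
          (Real.continuousAt_const_rpow hC.ne').tendsto.comp tendsto_one_div_atTop_nhds_zero_nat
        simpa using h5.mul_const lam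
      have : μ ≤ lam := by
        refine le_of_tendsto_of_tendsto hμ hlim ?_
        filter_upwards [eventually_ge_atTop 1] with n hn
        have h6 : (sawCount G v n : ℝ) ≤ C * lam ^ n :=
          le_trans (by exact_mod_cast FE.sawCount_le hlf v n) (hb n v)
        calc (sawCount G v n : ℝ) ^ ((1 : ℝ) / n) ≤ (C * lam ^ n) ^ ((1 : ℝ) / n) :=
              Real.rpow_le_rpow (by positivity) h6 (by positivity)
          _ = C ^ ((1 : ℝ) / n) * lam := by
              rw [Real.mul_rpow hC.le (by positivity), one_div,
                Real.pow_rpow_inv_natCast hl.le (by omega)]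
      linarith
    filter_upwards [hev, eventually_ge_atTop 1] with n hn hn1
    refine h1.trans_le ?_
    calc lam' = (lam' ^ n) ^ ((1 : ℝ) / n) := by
          rw [one_div, Real.pow_rpow_inv_natCast hl'.le (by omega)]
      _ ≤ _ := by
          apply Real.rpow_le_rpow (by positivity) _ (by positivity)
          refine hn.le.trans ?_
          exact_mod_cast FE.le_fwd hlf v n
  · intro b hb
    filter_upwards [(tendsto_order.1 hμ).2 b hb] with n hn
    exact (hle n).trans_lt hn
end

section
/- Let G be an infinite, connected, locally finite simple graph, let Γ be a subgroup of Aut(G) acting transitively on the vertex set V, and let 𝒜 be a non-trivial normal subgroup of Γ. Suppose that every SAW of G of length 1 or 2 has its two endpoints in distinct 𝒜-orbits (equivalently, the shortest SAW of G with distinct endpoints in the same 𝒜-orbit has length at least 3). Let G/𝒜 be the quotient graph, and let σ̄_n(𝒜v) denote the number of n-step SAWs in G/𝒜 from the orbit 𝒜v. If σ_n(v)^{1/n} → μ as n → ∞ for a vertex v of G, then limsup_{n→∞} σ̄_n(𝒜v)^{1/n} < μ. -/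
open Filter

/-- The quotient graph `G/𝒜` of a graph `G` by a group `A` of permutations of its vertices:
the vertices are the `A`-orbits, two distinct orbits being adjacent iff some vertex of one
is adjacent in `G` to some vertex of the other. -/
def quotGraph {V : Type*} (G : SimpleGraph V) (A : Subgroup (Equiv.Perm V)) :
    SimpleGraph (Quotient (MulAction.orbitRel A V)) :=
  SimpleGraph.fromRel (fun x y => ∃ u w : V, G.Adj u w ∧
    Quotient.mk (MulAction.orbitRel A V) u = x ∧ Quotient.mk (MulAction.orbitRel A V) w = y)

namespace QG

section core
open Classical

variable {Q : Type*} (H : SimpleGraph Q) (hfin : ∀ x, (H.neighborSet x).Finite)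

/-- walks of `n` further vertices from `x` -/
noncomputable def walks : ℕ → Q → Finset (List Q)
  | 0, _ => {[]}
  | n + 1, x => (hfin x).toFinset.biUnion fun y => (walks n y).image (fun l => y :: l)

theorem mem_walks (n : ℕ) (x : Q) (l : List Q) :
    l ∈ walks H hfin n x ↔ l.length = n ∧ List.IsChain H.Adj (x :: l) := by
  induction n generalizing x l with
  | zero =>
    simp only [walks, Finset.mem_singleton, List.length_eq_zero_iff]
    constructor
    · rintro rfl; simp
    · exact fun h => h.1
  | succ n ih =>
    simp only [walks, Finset.mem_biUnion, Finset.mem_image, Set.Finite.mem_toFinset,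
      SimpleGraph.mem_neighborSet, ih]
    constructor
    · rintro ⟨y, hy, l', ⟨h1, h2⟩, rfl⟩
      exact ⟨by simp [h1], by simpa using ⟨hy, h2⟩⟩
    · rintro ⟨h1, h2⟩
      cases l with
      | nil => simp at h1
      | cons y l' =>
        simp only [List.isChain_cons_cons] at h2
        exact ⟨y, h2.1, l', ⟨by simpa using h1, h2.2⟩, rfl⟩

/-- balls -/
noncomputable def ball : ℕ → Q → Finset Q
  | 0, x => {x}
  | n + 1, x => insert x ((hfin x).toFinset.biUnion fun y => ball n y)

theorem self_mem_ball (n : ℕ) (x : Q) : x ∈ ball H hfin n x := by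
  cases n <;> simp [ball]

theorem ball_succ {n : ℕ} {x y z : Q} (h : H.Adj x y) (hz : z ∈ ball H hfin n y) :
    z ∈ ball H hfin (n + 1) x := by
  simp only [ball, Finset.mem_insert, Finset.mem_biUnion, Set.Finite.mem_toFinset,
      SimpleGraph.mem_neighborSet]
  exact Or.inr ⟨y, h, hz⟩

theorem ball_mono {n : ℕ} : ∀ {m : ℕ} {x : Q}, n ≤ m → ball H hfin n x ⊆ ball H hfin m x := by
  induction n with
  | zero => intro m x _ y hy; simp only [ball, Finset.mem_singleton] at hy; subst hy
            exact self_mem_ball H hfin m y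
  | succ n ih =>
    intro m x hm y hy
    obtain ⟨m, rfl⟩ : ∃ k, m = k + 1 := ⟨m - 1, by omega⟩
    simp only [ball, Finset.mem_insert, Finset.mem_biUnion] at hy ⊢
    rcases hy with h | ⟨z, hz, h⟩
    · exact Or.inl h
    · exact Or.inr ⟨z, hz, ih (by omega) h⟩

theorem ball_path (c : ℕ → Q) (hc : ∀ i, H.Adj (c i) (c (i + 1))) {m : ℕ} {z : Q} (n : ℕ) :
    ∀ i, z ∈ ball H hfin m (c (i + n)) → z ∈ ball H hfin (m + n) (c i) := by
  induction n with
  | zero => intro i h; exact h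
  | succ n ih =>
    intro i h
    refine ball_succ H hfin (hc i) (ih (i + 1) ?_)
    rwa [show i + 1 + n = i + (n + 1) by omega]

theorem ball_map (e : H ≃g H) (n : ℕ) : ∀ x, ball H hfin n (e x) = (ball H hfin n x).image e := by
  induction n with
  | zero => intro x; simp [ball]
  | succ n ih =>
    intro x
    ext z
    simp only [ball, Finset.mem_insert, Finset.mem_biUnion, Set.Finite.mem_toFinset,
      SimpleGraph.mem_neighborSet, Finset.mem_image]
    constructor
    · rintro (h | ⟨y, hy, hz⟩)
      · exact ⟨x, Or.inl rfl, h.symm⟩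
      · obtain ⟨y, rfl⟩ := e.surjective y
        rw [ih] at hz
        obtain ⟨w, hw, rfl⟩ := Finset.mem_image.1 hz
        exact ⟨w, Or.inr ⟨y, (SimpleGraph.Iso.map_adj_iff e).1 hy, hw⟩, rfl⟩
    · rintro ⟨w, (h | ⟨y, hy, hw⟩), rfl⟩
      · exact Or.inl (by rw [h])
      · refine Or.inr ⟨e y, (SimpleGraph.Iso.map_adj_iff e).2 hy, ?_⟩
        rw [ih]; exact Finset.mem_image_of_mem _ hw

theorem walks_map_mem (e : H ≃g H) (n : ℕ) (x : Q) (l : List Q) (h : l ∈ walks H hfin n x) :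
    l.map e ∈ walks H hfin n (e x) := by
  rw [mem_walks] at h ⊢
  refine ⟨by simp [h.1], ?_⟩
  rw [← List.map_cons]
  exact List.isChain_map_of_isChain e (fun a b hab => (SimpleGraph.Iso.map_adj_iff e).2 hab) h.2

/-- the class of self-avoiding lists with bounded local density -/
noncomputable def X (B : Q → Finset Q) (r n : ℕ) (x : Q) : Finset (List Q) :=
  (walks H hfin n x).filter (fun l => l.Nodup ∧ ∀ y ∈ l, (B y ∩ l.toFinset).card ≤ r)

theorem X_map_mem (B : Q → Finset Q) (e : H ≃g H) (hB : ∀ x, B (e x) = (B x).image e)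
    (r n : ℕ) (x : Q) (l : List Q) (h : l ∈ X H hfin B r n x) :
    l.map e ∈ X H hfin B r n (e x) := by
  simp only [X, Finset.mem_filter] at h ⊢
  refine ⟨walks_map_mem H hfin e n x l h.1, h.2.1.map e.injective, ?_⟩
  intro y hy
  obtain ⟨y, hy', rfl⟩ := List.mem_map.1 hy
  have : (l.map e).toFinset = l.toFinset.image e := by ext; simp
  rw [hB, this, ← Finset.image_inter _ _ e.injective, Finset.card_image_of_injective _ e.injective]
  exact h.2.2 y hy'

theorem X_card (B : Q → Finset Q) (hB : ∀ (e : H ≃g H) x, B (e x) = (B x).image e)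
    (htrans : ∀ x y, ∃ e : H ≃g H, e x = y) (r n : ℕ) (x y : Q) :
    (X H hfin B r n x).card = (X H hfin B r n y).card := by
  have key : ∀ x y, (X H hfin B r n x).card ≤ (X H hfin B r n y).card := by
    intro x y
    obtain ⟨e, rfl⟩ := htrans x y
    exact Finset.card_le_card_of_injOn (fun l => l.map e)
      (fun l hl => X_map_mem H hfin B e (hB e) r n x l hl)
      (fun a _ b _ h => List.map_injective_iff.2 e.injective h)
  exact le_antisymm (key x y) (key y x)

theorem walks_card (htrans : ∀ x y, ∃ e : H ≃g H, e x = y) (n : ℕ) (x y : Q) :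
    (walks H hfin n x).card = (walks H hfin n y).card := by
  have key : ∀ x y, (walks H hfin n x).card ≤ (walks H hfin n y).card := by
    intro x y
    obtain ⟨e, rfl⟩ := htrans x y
    exact Finset.card_le_card_of_injOn (fun l => l.map e)
      (fun l hl => walks_map_mem H hfin e n x l hl)
      (fun a _ b _ h => List.map_injective_iff.2 e.injective h)
  exact le_antisymm (key x y) (key y x)

/-- splitting -/
theorem X_split (B : Q → Finset Q) (r m n : ℕ) (x : Q) (l : List Q)
    (h : l ∈ X H hfin B r (m + n) x) :
    l.take m ∈ X H hfin B r m x ∧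
    l.drop m ∈ X H hfin B r n ((x :: l.take m).getLast (by simp)) := by
  simp only [X, Finset.mem_filter, mem_walks] at h ⊢
  obtain ⟨⟨hl, hc⟩, hn, hr⟩ := h
  have e : l.take m ++ l.drop m = l := List.take_append_drop m l
  have sub1 : l.take m ⊆ l := List.take_subset m l
  have sub2 : l.drop m ⊆ l := List.drop_subset m l
  have hc' : List.IsChain H.Adj ((x :: l.take m) ++ l.drop m) := by
    rw [List.cons_append, e]; exact hc
  refine ⟨⟨⟨by simp [hl], hc'.left_of_append⟩, hn.sublist (List.take_sublist m l), ?_⟩,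
    ⟨⟨by simp [hl], ?_⟩, hn.sublist (List.drop_sublist m l), ?_⟩⟩
  · intro y hy
    refine le_trans (Finset.card_le_card ?_) (hr y (sub1 hy))
    exact Finset.inter_subset_inter_left (fun z hz => by simpa using sub1 (by simpa using hz))
  · rw [List.isChain_cons]
    refine ⟨?_, hc'.right_of_append⟩
    intro y hy
    rw [List.isChain_append] at hc'
    exact hc'.2.2 _ (List.getLast_mem_getLast? _) _ hy
  · intro y hy
    refine le_trans (Finset.card_le_card ?_) (hr y (sub2 hy))
    exact Finset.inter_subset_inter_left (fun z hz => by simpa using sub2 (by simpa using hz))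

theorem X_sub (B : Q → Finset Q) (hB : ∀ (e : H ≃g H) x, B (e x) = (B x).image e)
    (htrans : ∀ x y, ∃ e : H ≃g H, e x = y) (r m n : ℕ) (x : Q) :
    (X H hfin B r (m + n) x).card ≤ (X H hfin B r m x).card * (X H hfin B r n x).card := by
  calc (X H hfin B r (m + n) x).card
      ≤ ((X H hfin B r m x).sigma
          (fun b => X H hfin B r n ((x :: b).getLast (by simp)))).card := by
        refine Finset.card_le_card_of_injOn (fun l => ⟨l.take m, l.drop m⟩) ?_ ?_
        · intro l hl
          have := X_split H hfin B r m n x l hl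
          simpa using this
        · intro a _ b _ h
          simp only [Sigma.mk.injEq, heq_eq_eq] at h
          rw [← List.take_append_drop m a, ← List.take_append_drop m b, h.1, h.2]
    _ = _ := by
        rw [Finset.card_sigma, Finset.sum_congr rfl
          (fun b _ => X_card H hfin B hB htrans r n _ x), Finset.sum_const, smul_eq_mul]

/-- a block is good for level `r` -/
def good (B : Q → Finset Q) (r : ℕ) (b : List Q) : Prop :=
  ∃ y ∈ b, r ≤ (B y ∩ b.toFinset).card

/-- number of good blocks -/
noncomputable def gcount (B : Q → Finset Q) (r m : ℕ) : ℕ → List Q → ℕ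
  | 0, _ => 0
  | k + 1, l => (if good B r (l.take m) then 1 else 0) + gcount B r m k (l.drop m)

theorem sum_block (B : Q → Finset Q) (r m : ℕ) (s : ℝ) (hs : 0 ≤ s) (x : Q) :
    ∑ b ∈ X H hfin B (r + 1) m x, s ^ (if good B (r + 1) b then 1 else 0)
      ≤ (X H hfin B r m x).card + s * (X H hfin B (r + 1) m x).card := by
  have : ∀ b ∈ X H hfin B (r + 1) m x, s ^ (if good B (r + 1) b then 1 else 0)
      ≤ (if b ∈ X H hfin B r m x then (1:ℝ) else 0) + s := by
    intro b hb
    by_cases hg : good B (r + 1) b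
    · simp only [hg, if_true, pow_one]
      split_ifs <;> linarith
    · have : b ∈ X H hfin B r m x := by
        simp only [X, Finset.mem_filter] at hb ⊢
        refine ⟨hb.1, hb.2.1, fun y hy => ?_⟩
        by_contra hlt
        exact hg ⟨y, hy, by omega⟩
      simp [hg, this, hs]
  refine (Finset.sum_le_sum this).trans ?_
  rw [Finset.sum_add_distrib, Finset.sum_const, nsmul_eq_mul, mul_comm s]
  gcongr
  rw [Finset.sum_boole]
  exact_mod_cast Finset.card_le_card (fun b hb => (Finset.mem_filter.1 hb).2)

theorem sum_blocks (B : Q → Finset Q) (hB : ∀ (e : H ≃g H) x, B (e x) = (B x).image e)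
    (htrans : ∀ x y, ∃ e : H ≃g H, e x = y) (r m : ℕ) (s : ℝ) (hs : 0 ≤ s) (x0 : Q) (k : ℕ) :
    ∀ x, ∑ l ∈ X H hfin B (r + 1) (m * k) x, s ^ (gcount B (r + 1) m k l)
      ≤ ((X H hfin B r m x0).card + s * (X H hfin B (r + 1) m x0).card) ^ k := by
  induction k with
  | zero =>
    intro x
    simp only [gcount, pow_zero, Finset.sum_const, nsmul_eq_mul, mul_one, mul_zero]
    have : X H hfin B (r + 1) 0 x ⊆ {[]} := by
      intro l hl
      simp only [X, Finset.mem_filter, walks] at hl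
      exact hl.1
    exact_mod_cast Finset.card_le_card this
  | succ k ih =>
    intro x
    set A : ℝ := (X H hfin B r m x0).card + s * (X H hfin B (r + 1) m x0).card with hA
    have hA0 : 0 ≤ A := by positivity
    let F : (Σ _ : List Q, List Q) → ℝ := fun p =>
      s ^ (if good B (r + 1) p.1 then 1 else 0) * s ^ (gcount B (r + 1) m k p.2)
    calc ∑ l ∈ X H hfin B (r + 1) (m * (k + 1)) x, s ^ (gcount B (r + 1) m (k + 1) l)
        = ∑ l ∈ X H hfin B (r + 1) (m + m * k) x, F ⟨l.take m, l.drop m⟩ := by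
          rw [show m * (k + 1) = m + m * k by ring]
          refine Finset.sum_congr rfl fun l _ => ?_
          simp only [gcount, pow_add, F]
      _ = ∑ p ∈ (X H hfin B (r + 1) (m + m * k) x).image
            (fun l => (⟨l.take m, l.drop m⟩ : Σ _ : List Q, List Q)), F p := by
          rw [Finset.sum_image]
          intro a _ b _ h
          simp only [Sigma.mk.injEq, heq_eq_eq] at h
          rw [← List.take_append_drop m a, ← List.take_append_drop m b, h.1, h.2]
      _ ≤ ∑ p ∈ (X H hfin B (r + 1) m x).sigma
            (fun b => X H hfin B (r + 1) (m * k) ((x :: b).getLast (by simp))), F p := by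
          refine Finset.sum_le_sum_of_subset_of_nonneg ?_ ?_
          · intro p hp
            obtain ⟨l, hl, rfl⟩ := Finset.mem_image.1 hp
            have := X_split H hfin B (r + 1) m (m * k) x l hl
            simpa using this
          · intro p _ _; positivity
      _ = ∑ b ∈ X H hfin B (r + 1) m x, s ^ (if good B (r + 1) b then 1 else 0) *
            ∑ l ∈ X H hfin B (r + 1) (m * k) ((x :: b).getLast (by simp)),
              s ^ (gcount B (r + 1) m k l) := by
          rw [Finset.sum_sigma]
          refine Finset.sum_congr rfl fun b _ => ?_
          rw [Finset.mul_sum]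
      _ ≤ ∑ b ∈ X H hfin B (r + 1) m x, s ^ (if good B (r + 1) b then 1 else 0) * A ^ k := by
          refine Finset.sum_le_sum fun b _ => ?_
          exact mul_le_mul_of_nonneg_left (ih _) (by positivity)
      _ ≤ A * A ^ k := by
          rw [← Finset.sum_mul]
          refine mul_le_mul_of_nonneg_right ?_ (by positivity)
          refine (sum_block H hfin B r m s hs x).trans ?_
          rw [X_card H hfin B hB htrans r m x x0, X_card H hfin B hB htrans (r + 1) m x x0]
      _ = A ^ (k + 1) := by ring

end core
end QG
namespace QG
section codes

variable {Q : Type*} {M : ℕ} (H : SimpleGraph Q) (ℓ : ℕ) (cyc : Q → ℕ → Q)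
  (dec : Q → Fin M → List Q)

/-- cycle data -/
structure CycData : Prop where
  pos : 1 ≤ ℓ
  zero : ∀ x, cyc x 0 = x
  adj : ∀ x i, H.Adj (cyc x i) (cyc x (i + 1))
  per : ∀ x i, cyc x (i + ℓ) = cyc x i
  inj : ∀ x i j, i < ℓ → j < ℓ → cyc x i = cyc x j → i = j

/-- a winding list -/
def IsWind (W : List Q) : Prop :=
  ∃ y i h, h < ℓ ∧ W = (List.range (ℓ + h + 1)).map (fun j => cyc y (i + j))

/-- output of an item -/
def outI : Q ⊕ (List Q × Fin M) → List Q
  | Sum.inl x => [x]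
  | Sum.inr p => p.1

/-- original of an item -/
def origI : Q ⊕ (List Q × Fin M) → List Q
  | Sum.inl x => [x]
  | Sum.inr ([], _) => []
  | Sum.inr (a :: _, c) => dec a c

/-- output -/
def out : List (Q ⊕ (List Q × Fin M)) → List Q
  | [] => []
  | a :: κ => outI a ++ out κ

/-- original -/
def orig : List (Q ⊕ (List Q × Fin M)) → List Q
  | [] => []
  | a :: κ => origI dec a ++ orig κ

/-- labels -/
def lab : List (Q ⊕ (List Q × Fin M)) → List (Fin M)
  | [] => []
  | Sum.inl _ :: κ => lab κ
  | Sum.inr p :: κ => p.2 :: lab κ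

/-- well formed item -/
def okI : Q ⊕ (List Q × Fin M) → Prop
  | Sum.inl _ => True
  | Sum.inr p => IsWind ℓ cyc p.1 ∧ (origI dec (Sum.inr p)).head? = p.1.head? ∧
      (origI dec (Sum.inr p)).getLast? = p.1.getLast?

/-- valid codes -/
def Valid : List (Q ⊕ (List Q × Fin M)) → Prop
  | [] => True
  | a :: κ => okI ℓ cyc dec a ∧ (∀ x ∈ outI a, x ∉ out κ) ∧ Valid κ

theorem out_append (κ κ' : List (Q ⊕ (List Q × Fin M))) : out (κ ++ κ') = out κ ++ out κ' := by
  induction κ with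
  | nil => rfl
  | cons a κ ih => simp [out, ih]

theorem orig_append (κ κ' : List (Q ⊕ (List Q × Fin M))) :
    orig dec (κ ++ κ') = orig dec κ ++ orig dec κ' := by
  induction κ with
  | nil => rfl
  | cons a κ ih => simp [orig, ih]

theorem lab_append (κ κ' : List (Q ⊕ (List Q × Fin M))) : lab (κ ++ κ') = lab κ ++ lab κ' := by
  induction κ with
  | nil => rfl
  | cons a κ ih => cases a <;> simp [lab, ih]

theorem Valid_append (κ κ' : List (Q ⊕ (List Q × Fin M))) :
    Valid ℓ cyc dec (κ ++ κ') ↔ Valid ℓ cyc dec κ ∧ Valid ℓ cyc dec κ' ∧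
      ∀ x ∈ out κ, x ∉ out κ' := by
  induction κ with
  | nil => simp [Valid, out]
  | cons a κ ih =>
    simp only [List.cons_append, Valid, ih, out_append, out, List.mem_append, not_or]
    grind

theorem wind_ne_nil {W : List Q} (h : IsWind ℓ cyc W) : W ≠ [] := by
  obtain ⟨y, i, h, _, rfl⟩ := h
  simp

theorem out_ne_nil (a : Q ⊕ (List Q × Fin M)) (h : okI ℓ cyc dec a) : outI a ≠ [] := by
  cases a with
  | inl x => simp [outI]
  | inr p => exact wind_ne_nil ℓ cyc h.1

theorem orig_head (a : Q ⊕ (List Q × Fin M)) (h : okI ℓ cyc dec a) :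
    (origI dec a).head? = (outI a).head? := by
  cases a with
  | inl x => simp [outI, origI]
  | inr p => exact h.2.1

theorem orig_last (a : Q ⊕ (List Q × Fin M)) (h : okI ℓ cyc dec a) :
    (origI dec a).getLast? = (outI a).getLast? := by
  cases a with
  | inl x => simp [outI, origI]
  | inr p => exact h.2.2

theorem orig_ne_nil (a : Q ⊕ (List Q × Fin M)) (h : okI ℓ cyc dec a) : origI dec a ≠ [] := by
  intro h0
  have := orig_head ℓ cyc dec a h
  rw [h0] at this
  exact out_ne_nil ℓ cyc dec a h (List.head?_eq_none_iff.1 this.symm)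

theorem orig_nil (κ : List (Q ⊕ (List Q × Fin M))) (h : Valid ℓ cyc dec κ)
    (h0 : orig dec κ = []) : κ = [] := by
  cases κ with
  | nil => rfl
  | cons a κ =>
    simp only [orig, List.append_eq_nil_iff] at h0
    exact absurd h0.1 (orig_ne_nil ℓ cyc dec a h.1)

theorem orig_head_list (κ : List (Q ⊕ (List Q × Fin M))) (h : Valid ℓ cyc dec κ) :
    (orig dec κ).head? = (out κ).head? := by
  cases κ with
  | nil => rfl
  | cons a κ =>
    simp only [orig, out]
    rw [List.head?_append_of_ne_nil _ (orig_ne_nil ℓ cyc dec a h.1),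
      List.head?_append_of_ne_nil _ (out_ne_nil ℓ cyc dec a h.1)]
    exact orig_head ℓ cyc dec a h.1

variable {H ℓ cyc}

theorem wind_chain (hC : CycData H ℓ cyc) {W : List Q} (h : IsWind ℓ cyc W) :
    List.IsChain H.Adj W := by
  obtain ⟨y, i, h, _, rfl⟩ := h
  rw [List.isChain_iff_getElem]
  intro j hj
  simp only [List.getElem_map, List.getElem_range]
  exact hC.adj y (i + j)

theorem out_chain (hC : CycData H ℓ cyc) (κ : List (Q ⊕ (List Q × Fin M)))
    (h : Valid ℓ cyc dec κ) (hch : List.IsChain H.Adj (orig dec κ)) :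
    List.IsChain H.Adj (out κ) := by
  induction κ with
  | nil => simp [out]
  | cons a κ ih =>
    simp only [orig, out] at hch ⊢
    rw [List.isChain_append] at hch ⊢
    refine ⟨?_, ih h.2.2 hch.2.1, ?_⟩
    · cases a with
      | inl x => simp [outI]
      | inr p => exact wind_chain hC h.1.1
    · rw [← orig_last ℓ cyc dec a h.1, ← orig_head_list ℓ cyc dec κ h.2.2]
      exact hch.2.2

theorem out_chain_cons (hC : CycData H ℓ cyc) (κ : List (Q ⊕ (List Q × Fin M)))
    (h : Valid ℓ cyc dec κ) (x : Q) (hch : List.IsChain H.Adj (x :: orig dec κ)) :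
    List.IsChain H.Adj (x :: out κ) := by
  rw [List.isChain_cons] at hch ⊢
  rw [← orig_head_list ℓ cyc dec κ h]
  exact ⟨hch.1, out_chain dec hC κ h hch.2⟩

theorem wind_head (hC : CycData H ℓ cyc) {W : List Q} (h : IsWind ℓ cyc W) :
    ∃ a W', W = a :: W' ∧ a ∈ W' := by
  obtain ⟨y, i, h, _, rfl⟩ := h
  have := hC.pos
  refine ⟨cyc y i, (List.range (ℓ + h)).map (fun j => cyc y (i + (j + 1))), ?_, ?_⟩
  · rw [List.range_succ_eq_map]; simp [Function.comp_def]
  · simp only [List.mem_map, List.mem_range]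
    refine ⟨ℓ - 1, by omega, ?_⟩
    rw [Nat.sub_add_cancel hC.pos, hC.per]

theorem wind_ext (hC : CycData H ℓ cyc) {W u : List Q} {z : Q} (h : IsWind ℓ cyc W)
    (h' : IsWind ℓ cyc (W ++ z :: u)) : z ∈ W := by
  obtain ⟨y, i, t, ht, hW⟩ := h'
  have hlen : ℓ + 1 ≤ W.length := by
    obtain ⟨_, _, _, _, rfl⟩ := h
    simp
  have := hC.pos
  have hlen2 : (W ++ z :: u).length = ℓ + t + 1 := by rw [hW]; simp
  have e1 : (W ++ z :: u)[W.length]'(by simp) = z := by simp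
  have e2 : (W ++ z :: u)[W.length - ℓ]'(by simp; omega) = W[W.length - ℓ]'(by omega) := by
    rw [List.getElem_append_left]
  have g : ∀ j (hj : j < (W ++ z :: u).length), (W ++ z :: u)[j] = cyc y (i + j) := by
    intro j hj
    simp only [hW, List.getElem_map, List.getElem_range]
  rw [g] at e1 e2
  have : z = W[W.length - ℓ]'(by omega) := by
    refine e1.symm.trans (Eq.trans ?_ e2)
    rw [← hC.per y (i + (W.length - ℓ))]
    congr 1; omega
  rw [this]; exact List.getElem_mem _

theorem decode (hC : CycData H ℓ cyc) (κ : List (Q ⊕ (List Q × Fin M))) :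
    ∀ κ', Valid ℓ cyc dec κ → Valid ℓ cyc dec κ' → out κ = out κ' →
      (lab κ).length = (lab κ').length ∧ (lab κ = lab κ' → κ = κ') := by
  have aux : ∀ (x : Q) (p : List Q × Fin M) (κ κ' : List (Q ⊕ (List Q × Fin M))),
      Valid ℓ cyc dec (Sum.inl x :: κ) → Valid ℓ cyc dec (Sum.inr p :: κ') →
      out (Sum.inl x :: κ) = out (Sum.inr p :: κ') → False := by
    intro x p κ κ' h h' ho
    obtain ⟨a, W', hW, ha⟩ := wind_head hC h'.1.1
    simp only [out, outI, hW, List.cons_append, List.nil_append, List.cons.injEq] at ho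
    apply h.2.1 x (by simp [outI])
    rw [ho.2, ho.1]
    exact List.mem_append_left _ ha
  have aux2 : ∀ (p p' : List Q × Fin M) (κ κ' : List (Q ⊕ (List Q × Fin M))) (u : List Q),
      Valid ℓ cyc dec (Sum.inr p :: κ) → Valid ℓ cyc dec (Sum.inr p' :: κ') →
      p'.1 = p.1 ++ u → out κ = u ++ out κ' → u = [] := by
    intro p p' κ κ' u h h' h1 h2
    cases u with
    | nil => rfl
    | cons z u =>
      exfalso
      have := wind_ext hC h.1.1 (h1 ▸ h'.1.1)
      exact h.2.1 z (by simpa [outI] using this) (by rw [h2]; simp)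
  induction κ with
  | nil =>
    intro κ' _ h' ho
    cases κ' with
    | nil => simp
    | cons a κ' =>
      simp only [out] at ho
      exact absurd (List.append_eq_nil_iff.1 ho.symm).1 (out_ne_nil ℓ cyc dec a h'.1)
  | cons a κ ih =>
    intro κ' h h' ho
    cases κ' with
    | nil =>
      simp only [out] at ho
      exact absurd (List.append_eq_nil_iff.1 ho).1 (out_ne_nil ℓ cyc dec a h.1)
    | cons a' κ' =>
      rcases a with x | p <;> rcases a' with x' | p'
      · simp only [out, outI, List.cons_append, List.nil_append, List.cons.injEq] at ho
        obtain ⟨i1, i2⟩ := ih κ' h.2.2 h'.2.2 ho.2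
        simp only [lab]
        exact ⟨i1, fun e => by rw [ho.1, i2 e]⟩
      · exact (aux _ _ _ _ h h' ho).elim
      · exact (aux _ _ _ _ h' h ho.symm).elim
      · have key : p.1 = p'.1 ∧ out κ = out κ' := by
          simp only [out, outI] at ho
          rcases List.append_eq_append_iff.1 ho with ⟨u, h1, h2⟩ | ⟨u, h1, h2⟩
          · have := aux2 p p' κ κ' u h h' h1 h2
            subst this; simp at h1 h2; exact ⟨h1.symm, h2⟩
          · have := aux2 p' p κ' κ u h' h h1 h2
            subst this; simp at h1 h2; exact ⟨h1, h2.symm⟩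
        obtain ⟨i1, i2⟩ := ih κ' h.2.2 h'.2.2 key.2
        simp only [lab]
        refine ⟨by simp [i1], fun e => ?_⟩
        simp only [List.cons.injEq] at e
        rw [i2 e.2, Prod.ext key.1 e.1]

theorem split_inj {κ₁ κ₂ κ₁' κ₂' : List (Q ⊕ (List Q × Fin M))} {b : List Q}
    (h : Valid ℓ cyc dec κ₁) (h' : Valid ℓ cyc dec κ₁') (e : orig dec κ₁ = b)
    (e' : orig dec κ₁' = b) (ha : κ₁ ++ κ₂ = κ₁' ++ κ₂') : κ₁ = κ₁' ∧ κ₂ = κ₂' := by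
  rcases List.append_eq_append_iff.1 ha with ⟨u, h1, h2⟩ | ⟨u, h1, h2⟩
  · subst h1
    rw [orig_append, e] at e'
    rw [Valid_append] at h'
    have := orig_nil ℓ cyc dec u h'.2.1 (by simpa using e')
    subst this; simpa using h2
  · subst h1
    rw [orig_append, e'] at e
    rw [Valid_append] at h
    have := orig_nil ℓ cyc dec u h.2.1 (by simpa using e)
    subst this; simpa using h2.symm

theorem plain_spec (b : List Q) (hb : b.Nodup) :
    let κ : List (Q ⊕ (List Q × Fin M)) := b.map Sum.inl
    Valid ℓ cyc dec κ ∧ orig dec κ = b ∧ out κ = b ∧ lab κ = [] := by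
  induction b with
  | nil => simp [Valid, orig, out, lab]
  | cons x b ih =>
    rw [List.nodup_cons] at hb
    obtain ⟨h1, h2, h3, h4⟩ := ih hb.2
    simp only [List.map_cons, Valid, orig, out, lab, h2, h3, h4, h1, okI, outI, origI]
    simp [hb.1]

theorem exists_first (P : Q → Prop) (b : List Q) (h : ∃ x ∈ b, P x) :
    ∃ b1 a rest, b = b1 ++ a :: rest ∧ P a ∧ ∀ x ∈ b1, ¬ P x := by
  induction b with
  | nil => simp at h
  | cons x b ih =>
    by_cases hx : P x
    · exact ⟨[], x, b, by simp, hx, by simp⟩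
    · obtain ⟨b1, a, rest, e, h1, h2⟩ := ih (by
        obtain ⟨z, hz, hP⟩ := h
        rcases List.mem_cons.1 hz with rfl | hz
        · exact absurd hP hx
        · exact ⟨z, hz, hP⟩)
      refine ⟨x :: b1, a, rest, by simp [e], h1, ?_⟩
      intro z hz
      rcases List.mem_cons.1 hz with rfl | hz
      · exact hx
      · exact h2 z hz

theorem exists_last (P : Q → Prop) (b : List Q) (h : ∃ x ∈ b, P x) :
    ∃ b1 a rest, b = b1 ++ a :: rest ∧ P a ∧ ∀ x ∈ rest, ¬ P x := by
  obtain ⟨b1, a, rest, e, h1, h2⟩ := exists_first P b.reverse (by simpa using h)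
  refine ⟨rest.reverse, a, b1.reverse, ?_, h1, by simpa using h2⟩
  rw [← List.reverse_reverse b, e]; simp

theorem cyc_mod (hC : CycData H ℓ cyc) (y : Q) (i : ℕ) : cyc y (i % ℓ) = cyc y i := by
  conv_rhs => rw [← Nat.mod_add_div i ℓ]
  generalize i % ℓ = a
  induction i / ℓ with
  | zero => simp
  | succ k ih => rw [Nat.mul_succ, ← Nat.add_assoc, hC.per, ih]

theorem mod_spec (hC : CycData H ℓ cyc) (m : ℕ)
    (hdec : ∀ a l, l.length < m → List.IsChain H.Adj (a :: l) → ∃ c, dec a c = a :: l)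
    (b : List Q) (hb : b.Nodup) (hch : List.IsChain H.Adj b) (hm : b.length ≤ m)
    (y : Q) (hy : y ∈ b) :
    ∃ κ : List (Q ⊕ (List Q × Fin M)), Valid ℓ cyc dec κ ∧ orig dec κ = b ∧
      (lab κ).length = 1 ∧ (out κ).length ≤ b.length + 2 * ℓ ∧
      ∀ x ∈ out κ, x ∈ b ∨ ∃ i, x = cyc y i := by
  have hpos := hC.pos
  obtain ⟨b1, a, rest, e1, ha, hb1⟩ := exists_first (fun x => ∃ i, x = cyc y i) b
    ⟨y, hy, 0, (hC.zero y).symm⟩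
  obtain ⟨s, f, b2, e2, hf, hb2⟩ := exists_last (fun x => ∃ i, x = cyc y i) (a :: rest)
    ⟨a, by simp, ha⟩
  -- the middle segment
  obtain ⟨t, ht⟩ : ∃ t, s ++ [f] = a :: t := by
    cases s with
    | nil => simp at e2; exact ⟨[], by simp [e2.1]⟩
    | cons z s => simp at e2; exact ⟨s ++ [f], by simp [e2.1]⟩
  have eb : b = b1 ++ (a :: t) ++ b2 := by
    rw [e1, e2, ← ht]; simp
  have htl : t.length < m := by
    rw [eb] at hm; simp at hm; omega
  have hch' : List.IsChain H.Adj (a :: t) := by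
    rw [eb] at hch; exact hch.left_of_append.right_of_append
  obtain ⟨c, hc⟩ := hdec a t htl hch'
  -- the winding
  obtain ⟨i, h, hh, hai, hfh⟩ : ∃ i h, h < ℓ ∧ a = cyc y i ∧ f = cyc y (i + h) := by
    obtain ⟨i, hi⟩ := ha
    obtain ⟨j, hj⟩ := hf
    have hi' : i % ℓ < ℓ := Nat.mod_lt _ hpos
    have hj' : j % ℓ < ℓ := Nat.mod_lt _ hpos
    by_cases hij : i % ℓ ≤ j % ℓ
    · refine ⟨i % ℓ, j % ℓ - i % ℓ, by omega, by rw [cyc_mod hC, hi], ?_⟩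
      rw [Nat.add_sub_cancel' hij, cyc_mod hC, hj]
    · refine ⟨i % ℓ, j % ℓ + ℓ - i % ℓ, by omega, by rw [cyc_mod hC, hi], ?_⟩
      rw [show i % ℓ + (j % ℓ + ℓ - i % ℓ) = j % ℓ + ℓ by omega, hC.per, cyc_mod hC, hj]
  set W := (List.range (ℓ + h + 1)).map (fun j => cyc y (i + j)) with hW
  have hwind : IsWind ℓ cyc W := ⟨y, i, h, hh, hW⟩
  obtain ⟨W', hW'⟩ : ∃ W', W = a :: W' := by
    rw [hW, List.range_succ_eq_map]; simp [hai]
  have hWl : W.getLast? = some f := by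
    rw [hW, List.range_succ]
    simp only [List.map_append, List.map_cons, List.map_nil, List.getLast?_append,
      List.getLast?_singleton, Option.some_or, hfh]
    rw [← hC.per y (i + h)]; congr 2; omega
  have horig : origI dec (Sum.inr (W, c)) = a :: t := by
    rw [hW']; simp only [origI, hc]
  have hWc : ∀ x ∈ W, ∃ i, x = cyc y i := by
    intro x hx
    simp only [hW, List.mem_map] at hx
    obtain ⟨j, _, rfl⟩ := hx
    exact ⟨_, rfl⟩
  rw [eb] at hb
  have hbn := hb
  rw [List.nodup_append] at hb
  obtain ⟨hb12, hb2n, hd⟩ := hb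
  rw [List.nodup_append] at hb12
  obtain ⟨v1, o1, u1, l1⟩ := plain_spec (M := M) (ℓ := ℓ) (cyc := cyc) dec b1 hb12.1
  obtain ⟨v2, o2, u2, l2⟩ := plain_spec (M := M) (ℓ := ℓ) (cyc := cyc) dec b2 hb2n
  refine ⟨b1.map Sum.inl ++ (Sum.inr (W, c) :: b2.map Sum.inl), ?_, ?_, ?_, ?_, ?_⟩
  · rw [Valid_append]
    refine ⟨v1, ⟨⟨hwind, ?_, ?_⟩, ?_, v2⟩, ?_⟩
    · rw [horig, hW']; simp
    · rw [horig, hWl, ← ht]; simp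
    · intro x hx hx2
      rw [u2] at hx2
      exact hb2 x hx2 (hWc x hx)
    · intro x hx hx2
      rw [u1] at hx
      simp only [out, List.mem_append, u2, outI] at hx2
      rcases hx2 with hx2 | hx2
      · exact hb1 x hx (hWc x hx2)
      · exact hd x (by simp [hx]) x hx2 rfl
  · rw [orig_append, o1, orig, o2, horig, eb]; simp
  · rw [lab_append, l1, lab, l2]; simp
  · rw [out_append, u1, out, u2, outI, eb]
    simp [hW]; omega
  · intro x hx
    rw [out_append, u1, out, u2, outI] at hx
    simp only [List.mem_append] at hx
    rcases hx with hx | hx | hx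
    · left; rw [eb]; simp [hx]
    · right; exact hWc x hx
    · left; rw [eb]; simp [hx]

end codes
end QG
namespace QG
section sums
open Classical

variable {Q : Type*} {M : ℕ} {H : SimpleGraph Q} {ℓ : ℕ} {cyc : Q → ℕ → Q}
  (dec : Q → Fin M → List Q)

/-- weight of a code -/
noncomputable def wt (z : ℝ) (κ : List (Q ⊕ (List Q × Fin M))) : ℝ :=
  z ^ (out κ).length * ((M : ℝ)⁻¹) ^ (lab κ).length

theorem wt_append (z : ℝ) (κ κ' : List (Q ⊕ (List Q × Fin M))) :
    wt z (κ ++ κ') = wt z κ * wt z κ' := by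
  simp only [wt, out_append, lab_append, List.length_append, pow_add]; ring

theorem wt_nonneg {z : ℝ} (hz : 0 ≤ z) (κ : List (Q ⊕ (List Q × Fin M))) : 0 ≤ wt z κ := by
  unfold wt; positivity

/-- where the output of a code lives -/
def Loc (cyc : Q → ℕ → Q) (B : Q → Finset Q) (r : ℕ) (l : List Q) (x : Q) : Prop :=
  x ∈ l ∨ ∃ y ∈ l, r ≤ (B y ∩ l.toFinset).card ∧ ∃ i, x = cyc y i

theorem Loc_mono {B : Q → Finset Q} {r : ℕ} {l l' : List Q} {x : Q} (h : l ⊆ l')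
    (hx : Loc cyc B r l x) : Loc cyc B r l' x := by
  rcases hx with hx | ⟨y, hy, hr, hi⟩
  · exact Or.inl (h hx)
  · refine Or.inr ⟨y, h hy, hr.trans (Finset.card_le_card ?_), hi⟩
    exact Finset.inter_subset_inter_left (fun z hz => by simpa using h (by simpa using hz))

theorem no_extra {B : Q → Finset Q} {r : ℕ} {b l' l : List Q} (h1 : b ⊆ l) (h2 : l' ⊆ l)
    (hd : ∀ x ∈ b, x ∉ l') (hr : ∀ y ∈ l, (B y ∩ l.toFinset).card ≤ r) {y z : Q} (hy : y ∈ b)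
    (hyr : r ≤ (B y ∩ b.toFinset).card) (hz : z ∈ l') (hzB : z ∈ B y) : False := by
  have : insert z (B y ∩ b.toFinset) ⊆ B y ∩ l.toFinset := by
    intro w hw
    rcases Finset.mem_insert.1 hw with rfl | hw
    · simp [hzB, h2 hz]
    · simp only [Finset.mem_inter, List.mem_toFinset] at hw ⊢
      exact ⟨hw.1, h1 hw.2⟩
  have h3 := Finset.card_le_card this
  rw [Finset.card_insert_of_notMem (by
    simp only [Finset.mem_inter, List.mem_toFinset, not_and]
    exact fun _ h => hd z h hz)] at h3
  have := hr y (h1 hy)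
  omega

theorem Loc_disj {B : Q → Finset Q} (hB1 : ∀ y i, cyc y i ∈ B y)
    (hB2 : ∀ y y' i j, cyc y i = cyc y' j → y' ∈ B y)
    {r : ℕ} {b l' l : List Q} (h1 : b ⊆ l) (h2 : l' ⊆ l)
    (hd : ∀ x ∈ b, x ∉ l') (hr : ∀ y ∈ l, (B y ∩ l.toFinset).card ≤ r) {x : Q}
    (hx : Loc cyc B r b x) (hx' : Loc cyc B r l' x) : False := by
  rcases hx with hx | ⟨y, hy, hyr, i, hi⟩ <;> rcases hx' with hx' | ⟨y', hy', hyr', i', hi'⟩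
  · exact hd x hx hx'
  · exact no_extra h2 h1 (fun w hw hw' => hd w hw' hw) hr hy' hyr' hx (hi' ▸ hB1 y' i')
  · exact no_extra h1 h2 hd hr hy hyr hx' (hi ▸ hB1 y i)
  · exact no_extra h1 h2 hd hr hy hyr hy' (hB2 y y' i i' (hi.symm.trans hi'))

theorem block_codes (hC : CycData H ℓ cyc) (m : ℕ) (hM : 1 ≤ M)
    (hdec : ∀ a l, l.length < m → List.IsChain H.Adj (a :: l) → ∃ c, dec a c = a :: l)
    (B : Q → Finset Q) (r : ℕ) (z t : ℝ) (hz : 0 < z) (hz1 : z ≤ 1)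
    (ht : t ≤ 1 + z ^ (2 * ℓ) * (M : ℝ)⁻¹)
    (b : List Q) (hb : b.Nodup) (hch : List.IsChain H.Adj b) (hm : b.length = m) :
    ∃ K : Finset (List (Q ⊕ (List Q × Fin M))),
      (∀ κ ∈ K, Valid ℓ cyc dec κ ∧ orig dec κ = b ∧ (out κ).length ≤ m + 2 * ℓ ∧
        ∀ x ∈ out κ, Loc cyc B r b x) ∧
      z ^ m * t ^ (if good B r b then 1 else 0) ≤ ∑ κ ∈ K, wt z κ := by
  obtain ⟨v1, o1, u1, l1⟩ := plain_spec (M := M) (ℓ := ℓ) (cyc := cyc) dec b hb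
  have hplain : wt z (M := M) (b.map Sum.inl) = z ^ m := by
    simp only [wt, u1, l1, hm]; simp
  by_cases hg : good B r b
  · obtain ⟨y, hy, hyr⟩ := hg
    obtain ⟨κ, v, o, hl, hlen, hloc⟩ := mod_spec dec hC m hdec b hb hch hm.le y hy
    have hne : (b.map Sum.inl : List (Q ⊕ (List Q × Fin M))) ≠ κ := by
      intro e
      rw [← e, l1] at hl
      simp at hl
    refine ⟨{b.map Sum.inl, κ}, ?_, ?_⟩
    · intro κ' hκ'
      simp only [Finset.mem_insert, Finset.mem_singleton] at hκ'
      rcases hκ' with rfl | rfl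
      · refine ⟨v1, o1, by rw [u1]; omega, fun x hx => Or.inl (u1 ▸ hx)⟩
      · refine ⟨v, o, by omega, fun x hx => ?_⟩
        rcases hloc x hx with h | h
        · exact Or.inl h
        · exact Or.inr ⟨y, hy, hyr, h⟩
    · rw [Finset.sum_pair hne, hplain]
      have : z ^ m * (z ^ (2 * ℓ) * (M : ℝ)⁻¹) ≤ wt z κ := by
        rw [wt, hl, pow_one, ← mul_assoc, ← pow_add]
        refine mul_le_mul_of_nonneg_right ?_ (by positivity)
        exact pow_le_pow_of_le_one hz.le hz1 (by omega)
      have hg' : good B r b := ⟨y, hy, hyr⟩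
      simp only [hg', if_true, pow_one]
      have h3 := mul_le_mul_of_nonneg_left ht (pow_nonneg hz.le m)
      linarith
  · refine ⟨{b.map Sum.inl}, ?_, ?_⟩
    · intro κ' hκ'
      simp only [Finset.mem_singleton] at hκ'
      subst hκ'
      exact ⟨v1, o1, by rw [u1]; omega, fun x hx => Or.inl (u1 ▸ hx)⟩
    · simp [hg, hplain]

theorem list_codes (hC : CycData H ℓ cyc) (m : ℕ) (hM : 1 ≤ M)
    (hdec : ∀ a l, l.length < m → List.IsChain H.Adj (a :: l) → ∃ c, dec a c = a :: l)
    (B : Q → Finset Q) (hB1 : ∀ y i, cyc y i ∈ B y)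
    (hB2 : ∀ y y' i j, cyc y i = cyc y' j → y' ∈ B y)
    (r : ℕ) (z t : ℝ) (hz : 0 < z) (hz1 : z ≤ 1) (ht0 : 0 ≤ t)
    (ht : t ≤ 1 + z ^ (2 * ℓ) * (M : ℝ)⁻¹) (k : ℕ) :
    ∀ (l : List Q), l.Nodup → List.IsChain H.Adj l → l.length = m * k →
      (∀ y ∈ l, (B y ∩ l.toFinset).card ≤ r) →
    ∃ K : Finset (List (Q ⊕ (List Q × Fin M))),
      (∀ κ ∈ K, Valid ℓ cyc dec κ ∧ orig dec κ = l ∧ (out κ).length ≤ (m + 2 * ℓ) * k ∧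
        ∀ x ∈ out κ, Loc cyc B r l x) ∧
      z ^ (m * k) * t ^ (gcount B r m k l) ≤ ∑ κ ∈ K, wt z κ := by
  induction k with
  | zero =>
    intro l _ _ hl _
    have : l = [] := by simpa using hl
    subst this
    refine ⟨{[]}, ?_, ?_⟩
    · intro κ hκ
      simp only [Finset.mem_singleton] at hκ
      subst hκ
      simp [Valid, orig, out]
    · simp [gcount, wt, out, lab]
  | succ k ih =>
    intro l hn hch hl hr
    have e : l.take m ++ l.drop m = l := List.take_append_drop m l
    have sub1 : l.take m ⊆ l := List.take_subset m l
    have sub2 : l.drop m ⊆ l := List.drop_subset m l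
    have hl' : l.length = m + m * k := by rw [hl]; ring
    have hn' := hn
    rw [← e, List.nodup_append] at hn'
    have hd : ∀ x ∈ l.take m, x ∉ l.drop m := fun x h h' => hn'.2.2 x h x h' rfl
    obtain ⟨K1, hK1, hs1⟩ := block_codes dec hC m hM hdec B r z t hz hz1 ht (l.take m)
      hn'.1 (hch.take m) (by simp [hl'])
    obtain ⟨K2, hK2, hs2⟩ := ih (l.drop m) hn'.2.1 (hch.drop m) (by simp [hl']) (by
      intro y hy
      refine le_trans (Finset.card_le_card ?_) (hr y (sub2 hy))
      exact Finset.inter_subset_inter_left (fun z hz => by simpa using sub2 (by simpa using hz)))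
    refine ⟨(K1 ×ˢ K2).image (fun p => p.1 ++ p.2), ?_, ?_⟩
    · intro κ hκ
      simp only [Finset.mem_image, Finset.mem_product] at hκ
      obtain ⟨⟨κ1, κ2⟩, ⟨h1, h2⟩, rfl⟩ := hκ
      obtain ⟨v1, o1, n1, c1⟩ := hK1 _ h1
      obtain ⟨v2, o2, n2, c2⟩ := hK2 _ h2
      refine ⟨?_, ?_, ?_, ?_⟩
      · rw [Valid_append]
        refine ⟨v1, v2, fun x hx hx' => ?_⟩
        exact Loc_disj hB1 hB2 sub1 sub2 hd hr (c1 x hx) (c2 x hx')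
      · rw [orig_append, o1, o2, e]
      · rw [out_append, List.length_append]
        calc _ ≤ (m + 2 * ℓ) + (m + 2 * ℓ) * k := add_le_add n1 n2
          _ = _ := by ring
      · intro x hx
        rw [out_append, List.mem_append] at hx
        rcases hx with hx | hx
        · exact Loc_mono sub1 (c1 x hx)
        · exact Loc_mono sub2 (c2 x hx)
    · rw [Finset.sum_image, Finset.sum_product]
      · simp only [wt_append]
        rw [← Finset.sum_mul_sum]
        calc z ^ (m * (k + 1)) * t ^ gcount B r m (k + 1) l
            = (z ^ m * t ^ (if good B r (l.take m) then 1 else 0)) *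
              (z ^ (m * k) * t ^ (gcount B r m k (l.drop m))) := by
              simp only [gcount, pow_add, mul_add, mul_one]; ring
          _ ≤ _ := mul_le_mul hs1 hs2 (by positivity)
              (Finset.sum_nonneg fun κ _ => wt_nonneg hz.le κ)
      · rintro ⟨a1, a2⟩ ha ⟨b1, b2⟩ hb hab
        simp only [Finset.coe_product, Set.mem_prod, Finset.mem_coe] at ha hb
        have := split_inj dec (hK1 _ ha.1).1 (hK1 _ hb.1).1 (hK1 _ ha.1).2.1 (hK1 _ hb.1).2.1 hab
        exact Prod.ext this.1 this.2

theorem fiber_le (hC : CycData H ℓ cyc) (hM : 1 ≤ M)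
    (K : Finset (List (Q ⊕ (List Q × Fin M)))) (φ : List Q)
    (hK : ∀ κ ∈ K, Valid ℓ cyc dec κ ∧ out κ = φ) :
    ∑ κ ∈ K, ((M : ℝ)⁻¹) ^ (lab κ).length ≤ 1 := by
  rcases K.eq_empty_or_nonempty with rfl | ⟨κ0, h0⟩
  · simp
  set J := (lab κ0).length with hJ
  have hlen : ∀ κ ∈ K, (lab κ).length = J := fun κ hκ =>
    (decode dec hC κ κ0 (hK κ hκ).1 (hK κ0 h0).1 ((hK κ hκ).2.trans (hK κ0 h0).2.symm)).1
  have hcard : K.card ≤ M ^ J := by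
    have : Fintype.card K ≤ Fintype.card (List.Vector (Fin M) J) :=
      Fintype.card_le_of_injective
        (fun κ : K => (⟨lab κ.1, hlen κ.1 κ.2⟩ : List.Vector (Fin M) J)) (by
          rintro ⟨a, ha⟩ ⟨b, hb⟩ hab
          exact Subtype.ext ((decode dec hC a b (hK a ha).1 (hK b hb).1
            ((hK a ha).2.trans (hK b hb).2.symm)).2 (congrArg Subtype.val hab)))
    simpa [card_vector] using this
  rw [Finset.sum_congr rfl (fun κ hκ => by rw [hlen κ hκ]), Finset.sum_const, nsmul_eq_mul]
  have hM0 : (0:ℝ) < M := by exact_mod_cast hM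
  rw [inv_pow, ← div_eq_mul_inv, div_le_one (by positivity)]
  exact_mod_cast hcard

theorem main_sum (hfin : ∀ x, (H.neighborSet x).Finite) (hC : CycData H ℓ cyc) (m : ℕ)
    (hM : 1 ≤ M)
    (hdec : ∀ a l, l.length < m → List.IsChain H.Adj (a :: l) → ∃ c, dec a c = a :: l)
    (B : Q → Finset Q) (hB1 : ∀ y i, cyc y i ∈ B y)
    (hB2 : ∀ y y' i j, cyc y i = cyc y' j → y' ∈ B y)
    (r : ℕ) (z t : ℝ) (hz : 0 < z) (hz1 : z ≤ 1) (ht0 : 0 ≤ t)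
    (ht : t ≤ 1 + z ^ (2 * ℓ) * (M : ℝ)⁻¹) (k : ℕ) (x : Q)
    (τ : ℕ → ℝ)
    (hτ : ∀ (N : ℕ) (S : Finset (List Q)), (∀ φ ∈ S, φ.length = N ∧
      List.IsChain H.Adj (x :: φ) ∧ ∃ κ : List (Q ⊕ (List Q × Fin M)),
        Valid ℓ cyc dec κ ∧ out κ = φ) → (S.card : ℝ) ≤ τ N) :
    z ^ (m * k) * ∑ l ∈ X H hfin B r (m * k) x, t ^ (gcount B r m k l)
      ≤ ∑ N ∈ Finset.range ((m + 2 * ℓ) * k + 1), τ N * z ^ N := by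
  have hX : ∀ l ∈ X H hfin B r (m * k) x, ∃ K : Finset (List (Q ⊕ (List Q × Fin M))),
      (∀ κ ∈ K, Valid ℓ cyc dec κ ∧ orig dec κ = l ∧ (out κ).length ≤ (m + 2 * ℓ) * k ∧
        ∀ x ∈ out κ, Loc cyc B r l x) ∧
      z ^ (m * k) * t ^ (gcount B r m k l) ≤ ∑ κ ∈ K, wt z κ := by
    intro l hl
    simp only [X, Finset.mem_filter, mem_walks] at hl
    exact list_codes dec hC m hM hdec B hB1 hB2 r z t hz hz1 ht0 ht k l hl.2.1
      (List.isChain_cons.1 hl.1.2).2 hl.1.1 hl.2.2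
  choose! Kf hKf hKs using hX
  set K := (X H hfin B r (m * k) x).biUnion Kf with hKdef
  have hK : ∀ κ ∈ K, Valid ℓ cyc dec κ ∧ (out κ).length ≤ (m + 2 * ℓ) * k ∧
      List.IsChain H.Adj (x :: out κ) := by
    intro κ hκ
    obtain ⟨l, hl, hκl⟩ := Finset.mem_biUnion.1 hκ
    obtain ⟨v, o, n, _⟩ := hKf l hl κ hκl
    refine ⟨v, n, out_chain_cons dec hC κ v x ?_⟩
    rw [o]
    simp only [X, Finset.mem_filter, mem_walks] at hl
    exact hl.1.2
  set Φ := K.image out with hΦ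
  calc z ^ (m * k) * ∑ l ∈ X H hfin B r (m * k) x, t ^ (gcount B r m k l)
      = ∑ l ∈ X H hfin B r (m * k) x, z ^ (m * k) * t ^ (gcount B r m k l) := by
        rw [Finset.mul_sum]
    _ ≤ ∑ l ∈ X H hfin B r (m * k) x, ∑ κ ∈ Kf l, wt z κ := Finset.sum_le_sum hKs
    _ = ∑ κ ∈ K, wt z κ := by
        rw [hKdef, Finset.sum_biUnion]
        intro a ha b hb hab
        rw [Function.onFun, Finset.disjoint_left]
        intro κ h1 h2
        exact hab ((hKf a ha κ h1).2.1.symm.trans (hKf b hb κ h2).2.1)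
    _ = ∑ φ ∈ Φ, ∑ κ ∈ K with out κ = φ, wt z κ :=
        (Finset.sum_fiberwise_of_maps_to (fun κ hκ => Finset.mem_image_of_mem _ hκ) _).symm
    _ ≤ ∑ φ ∈ Φ, z ^ φ.length := by
        refine Finset.sum_le_sum fun φ _ => ?_
        have : ∑ κ ∈ K with out κ = φ, wt z κ
            = z ^ φ.length * ∑ κ ∈ K with out κ = φ, ((M : ℝ)⁻¹) ^ (lab κ).length := by
          rw [Finset.mul_sum]
          refine Finset.sum_congr rfl fun κ hκ => ?_
          rw [wt, (Finset.mem_filter.1 hκ).2]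
        rw [this]
        refine mul_le_of_le_one_right (by positivity) (fiber_le dec hC hM _ φ ?_)
        intro κ hκ
        exact ⟨(hK κ (Finset.mem_filter.1 hκ).1).1, (Finset.mem_filter.1 hκ).2⟩
    _ = ∑ N ∈ Finset.range ((m + 2 * ℓ) * k + 1), ∑ φ ∈ Φ with φ.length = N, z ^ φ.length := by
        refine (Finset.sum_fiberwise_of_maps_to (fun φ hφ => ?_) _).symm
        obtain ⟨κ, hκ, rfl⟩ := Finset.mem_image.1 hφ
        have := (hK κ hκ).2.1
        simp only [Finset.mem_range]; omega
    _ ≤ _ := by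
        refine Finset.sum_le_sum fun N _ => ?_
        rw [Finset.sum_congr rfl (fun φ hφ => by rw [(Finset.mem_filter.1 hφ).2]),
          Finset.sum_const, nsmul_eq_mul]
        refine mul_le_mul_of_nonneg_right (hτ N _ ?_) (by positivity)
        intro φ hφ
        obtain ⟨h1, h2⟩ := Finset.mem_filter.1 hφ
        obtain ⟨κ, hκ, rfl⟩ := Finset.mem_image.1 h1
        exact ⟨h2, (hK κ hκ).2.2, κ, (hK κ hκ).1, rfl⟩

end sums
end QG
namespace QG
section analytic
open Classical Filter Topology

theorem young (y θk : ℝ) (p : ℕ) (hy : 0 < y) (hθ : 0 < θk) :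
    1 ≤ θk⁻¹ * y + θk ^ p * (y⁻¹) ^ p := by
  rcases le_total θk y with h | h
  · have : 1 ≤ θk⁻¹ * y := by rw [inv_mul_eq_div, one_le_div hθ]; exact h
    have : 0 ≤ θk ^ p * (y⁻¹) ^ p := by positivity
    linarith
  · have : 1 ≤ θk ^ p * (y⁻¹) ^ p := by
      rw [← mul_pow]
      apply one_le_pow₀
      rw [← div_eq_mul_inv, one_le_div hy]; exact h
    have : 0 ≤ θk⁻¹ * y := by positivity
    linarith

theorem exists_dec {Q : Type*} (H : SimpleGraph Q) (hfin : ∀ x, (H.neighborSet x).Finite)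
    (htrans : ∀ x y, ∃ e : H ≃g H, e x = y) (x0 : Q) (m : ℕ) :
    ∃ (M : ℕ) (dec : Q → Fin M → List Q), 1 ≤ M ∧
      ∀ a l, l.length < m → List.IsChain H.Adj (a :: l) → ∃ c, dec a c = a :: l := by
  set M := 1 + ∑ j ∈ Finset.range m, (walks H hfin j x0).card with hM
  have : ∀ a : Q, ∃ f : Fin M → List Q, ∀ l, l.length < m → List.IsChain H.Adj (a :: l) →
      ∃ c, f c = a :: l := by
    intro a
    set S := (Finset.range m).biUnion (fun j => walks H hfin j a) with hS
    have hc : S.card ≤ M := by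
      refine Finset.card_biUnion_le.trans ?_
      rw [Finset.sum_congr rfl (fun j _ => walks_card H hfin htrans j a x0)]
      omega
    refine ⟨fun c => a :: (if h : c.1 < S.card then (S.equivFin.symm ⟨c.1, h⟩ : List Q) else []),
      ?_⟩
    intro l hl hch
    have hlS : l ∈ S := by
      rw [hS, Finset.mem_biUnion]
      exact ⟨l.length, by simpa using hl, (mem_walks H hfin _ a l).2 ⟨rfl, hch⟩⟩
    have hlt := (S.equivFin ⟨l, hlS⟩).2
    refine ⟨⟨(S.equivFin ⟨l, hlS⟩).1, by omega⟩, ?_⟩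
    simp
  choose dec hdec using this
  exact ⟨M, dec, by omega, hdec⟩

theorem core {Q : Type*} (H : SimpleGraph Q) (hfin : ∀ x, (H.neighborSet x).Finite)
    (htrans : ∀ x y, ∃ e : H ≃g H, e x = y) {ℓ : ℕ} {cyc : Q → ℕ → Q} (hC : CycData H ℓ cyc)
    (x : Q) (μ : ℝ) (hμ : 1 ≤ μ) (τ : ℕ → ℝ)
    (hτs : ∀ z : ℝ, 0 < z → z * μ < 1 → ∃ C, ∀ K, ∑ N ∈ Finset.range K, τ N * z ^ N ≤ C)
    (hτ : ∀ (M : ℕ) (dec : Q → Fin M → List Q) (N : ℕ) (S : Finset (List Q)),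
      (∀ φ ∈ S, φ.length = N ∧
      List.IsChain H.Adj (x :: φ) ∧ ∃ κ : List (Q ⊕ (List Q × Fin M)),
        Valid ℓ cyc dec κ ∧ out κ = φ) → (S.card : ℝ) ≤ τ N) :
    ∃ (B : Q → Finset Q) (R n : ℕ), (∀ (e : H ≃g H) x, B (e x) = (B x).image e) ∧
      (∀ y, (B y).card ≤ R) ∧ 1 ≤ n ∧ ((X H hfin B R n x).card : ℝ) < μ ^ n := by
  have hμ0 : 0 < μ := by linarith
  have hpos := hC.pos
  set B : Q → Finset Q := ball H hfin (2 * ℓ) with hBdef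
  have hB : ∀ (e : H ≃g H) x, B (e x) = (B x).image e := fun e x => ball_map H hfin e _ x
  have hBself : ∀ y, y ∈ B y := fun y => self_mem_ball H hfin _ y
  have hBpath : ∀ y n, n ≤ ℓ → ∀ z, z ∈ ball H hfin ℓ (cyc y n) → z ∈ B y := by
    intro y n hn z hz
    have := ball_path H hfin (cyc y) (hC.adj y) (m := ℓ) (z := z) n 0 (by simpa using hz)
    rw [hC.zero] at this
    exact ball_mono H hfin (by omega) this
  have hB1 : ∀ y i, cyc y i ∈ B y := by
    intro y i
    rw [← cyc_mod hC]
    exact hBpath y _ (Nat.mod_lt _ hpos).le _ (self_mem_ball H hfin _ _)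
  have hB2 : ∀ y y' i j, cyc y i = cyc y' j → y' ∈ B y := by
    intro y y' i j h
    rw [← cyc_mod hC, ← cyc_mod hC y'] at h
    have hj : j % ℓ < ℓ := Nat.mod_lt _ hpos
    refine hBpath y _ (Nat.mod_lt i hpos).le _ ?_
    rw [h]
    have h1 : y' ∈ ball H hfin 0 (cyc y' (j % ℓ + (ℓ - j % ℓ))) := by
      rw [Nat.add_sub_cancel' hj.le]
      have := hC.per y' 0
      rw [Nat.zero_add, hC.zero] at this
      rw [this]; exact self_mem_ball H hfin _ _
    exact ball_mono H hfin (by omega) (ball_path H hfin (cyc y') (hC.adj y') _ _ h1)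
  refine ⟨B, (B x).card, ?_⟩
  by_contra hcon
  push Not at hcon
  have hR : ∀ n, 1 ≤ n → μ ^ n ≤ (X H hfin B (B x).card n x).card := by
    intro n hn
    refine hcon n hB (fun y => ?_) hn
    obtain ⟨e, rfl⟩ := htrans x y
    rw [hB]; exact Finset.card_image_le
  have hex : ∃ r, ∀ n, 1 ≤ n → μ ^ n ≤ (X H hfin B r n x).card := ⟨_, hR⟩
  have hr0 := Nat.find_spec hex
  have hmin := fun {r} => Nat.find_min hex (m := r)
  generalize Nat.find hex = r0 at hr0 hmin
  cases r0 with
  | zero =>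
    have h1 := hr0 1 le_rfl
    have : X H hfin B 0 1 x = ∅ := by
      rw [Finset.eq_empty_iff_forall_notMem]
      intro l hl
      simp only [X, Finset.mem_filter, mem_walks] at hl
      obtain ⟨y, rfl⟩ := List.length_eq_one_iff.1 hl.1.1
      have := hl.2.2 y (by simp)
      rw [Nat.le_zero, Finset.card_eq_zero] at this
      have h2 : y ∈ B y ∩ [y].toFinset := by simp [hBself]
      rw [this] at h2; simp at h2
    rw [this] at h1
    simp at h1; linarith
  | succ r =>
    have := hmin (Nat.lt_succ_self r)
    push Not at this
    obtain ⟨m, hm, hD⟩ := this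
    obtain ⟨M, dec, hM, hdec⟩ := exists_dec H hfin htrans x m
    have hM0 : (0:ℝ) < M := by exact_mod_cast hM
    set D : ℝ := ((X H hfin B r m x).card : ℝ) with hDdef
    set U : ℝ := ((X H hfin B (r + 1) m x).card : ℝ) with hUdef
    set L : ℝ := μ ^ m with hL
    have hL0 : 0 < L := by positivity
    set t : ℝ := 1 + ((2 * μ)⁻¹) ^ (2 * ℓ) * (M : ℝ)⁻¹ with ht
    have ht1 : 1 < t := by
      have : 0 < ((2 * μ)⁻¹) ^ (2 * ℓ) * (M : ℝ)⁻¹ := by positivity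
      linarith
    have ht0 : 0 < t := by linarith
    obtain ⟨p, hp⟩ : ∃ p : ℕ, D + (t⁻¹) ^ p * U < L := by
      have h1 : Tendsto (fun p : ℕ => D + (t⁻¹) ^ p * U) atTop (𝓝 (D + 0 * U)) := by
        refine tendsto_const_nhds.add (Tendsto.mul_const _ ?_)
        exact tendsto_pow_atTop_nhds_zero_of_lt_one (by positivity) (inv_lt_one_of_one_lt₀ ht1)
      rw [zero_mul, add_zero] at h1
      exact (h1.eventually_lt_const hD).exists
    obtain ⟨θ, hθ1, hθ⟩ : ∃ θ : ℝ, 1 < θ ∧ θ ^ p * (D + (t⁻¹) ^ p * U) < L := by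
      have h1 : Tendsto (fun θ : ℝ => θ ^ p * (D + (t⁻¹) ^ p * U)) (𝓝[>] 1)
          (𝓝 (1 ^ p * (D + (t⁻¹) ^ p * U))) := by
        refine Tendsto.mono_left ?_ nhdsWithin_le_nhds
        exact (Continuous.tendsto (by fun_prop) 1)
      rw [one_pow, one_mul] at h1
      obtain ⟨θ, h2, h3⟩ := ((h1.eventually_lt_const hp).and self_mem_nhdsWithin).exists
      exact ⟨θ, h3, h2⟩
    have hθ0 : 0 < θ := by linarith
    obtain ⟨z, hz1, hz2, hz3⟩ : ∃ z : ℝ, (2 * μ)⁻¹ < z ∧ z < μ⁻¹ ∧ 1 < θ * (z ^ m * L) := by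
      have h1 : Tendsto (fun z : ℝ => θ * (z ^ m * L)) (𝓝[<] μ⁻¹) (𝓝 (θ * ((μ⁻¹) ^ m * L))) := by
        refine Tendsto.mono_left ?_ nhdsWithin_le_nhds
        exact (Continuous.tendsto (by fun_prop) _)
      have h0 : θ * ((μ⁻¹) ^ m * L) = θ := by
        rw [hL, ← mul_pow, inv_mul_cancel₀ hμ0.ne']; simp
      rw [h0] at h1
      have h2 : ∀ᶠ z in 𝓝[<] μ⁻¹, (2 * μ)⁻¹ < z := by
        refine eventually_nhdsWithin_of_eventually_nhds (lt_mem_nhds ?_)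
        apply inv_strictAnti₀ hμ0; linarith
      obtain ⟨z, ⟨a, b⟩, c⟩ := ((h2.and (h1.eventually_const_lt hθ1)).and
        self_mem_nhdsWithin).exists
      exact ⟨z, a, c, b⟩
    have hz0 : 0 < z := lt_trans (by positivity) hz1
    have hzμ : z * μ < 1 := by
      have := mul_lt_mul_of_pos_right hz2 hμ0
      rwa [inv_mul_cancel₀ hμ0.ne'] at this
    have hzle : z ≤ 1 := by
      have : μ⁻¹ ≤ 1 := inv_le_one_of_one_le₀ hμ
      linarith
    obtain ⟨C, hCb⟩ := hτs z hz0 hzμ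
    have htz : t ≤ 1 + z ^ (2 * ℓ) * (M : ℝ)⁻¹ := by
      rw [ht]; gcongr
    set A : ℝ := θ⁻¹ * (z ^ m)⁻¹ with hA
    set E : ℝ := θ ^ p * (D + (t⁻¹) ^ p * U) with hE
    have hA0 : 0 < A := by positivity
    have hE0 : 0 ≤ E := by positivity
    have hAL : A < L := by
      have e : A = (θ * z ^ m)⁻¹ := by rw [hA, mul_inv]
      rw [e, inv_lt_comm₀ (by positivity) hL0, inv_lt_iff_one_lt_mul₀ hL0]
      linarith
    have key : ∀ k : ℕ, 1 ≤ k → L ^ k ≤ C * A ^ k + E ^ k := by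
      intro k hk
      have h1 := hr0 (m * k) (Nat.mul_pos hm hk)
      have h2 := main_sum dec hfin hC m hM hdec B hB1 hB2 (r + 1) z t hz0 hzle ht0.le htz k x τ
        (hτ M dec)
      have h3 := sum_blocks H hfin B hB htrans r m ((t⁻¹) ^ p) (by positivity) x k x
      have h4 := h2.trans (hCb _)
      set XX := X H hfin B (r + 1) (m * k) x with hXX
      have h5 : (XX.card : ℝ) ≤ (θ ^ k)⁻¹ * ∑ l ∈ XX, t ^ (gcount B (r + 1) m k l)
          + (θ ^ k) ^ p * ∑ l ∈ XX, ((t⁻¹) ^ p) ^ (gcount B (r + 1) m k l) := by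
        rw [Finset.mul_sum, Finset.mul_sum, ← Finset.sum_add_distrib]
        calc (XX.card : ℝ) = ∑ l ∈ XX, (1:ℝ) := by simp
          _ ≤ _ := by
            refine Finset.sum_le_sum fun l _ => ?_
            have := young (t ^ (gcount B (r + 1) m k l)) (θ ^ k) p (by positivity) (by positivity)
            have e : ((t ^ (gcount B (r + 1) m k l))⁻¹) ^ p
                = ((t⁻¹) ^ p) ^ (gcount B (r + 1) m k l) := by
              rw [← inv_pow, ← pow_mul, ← pow_mul, mul_comm (gcount B (r + 1) m k l) p]
            rwa [e] at this
      have h6 : ∑ l ∈ XX, t ^ (gcount B (r + 1) m k l) ≤ C * (z ^ (m * k))⁻¹ := by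
        rw [← div_eq_mul_inv, le_div_iff₀ (by positivity)]
        linarith
      calc L ^ k = μ ^ (m * k) := by rw [hL, pow_mul]
        _ ≤ _ := h1
        _ ≤ _ := h5
        _ ≤ (θ ^ k)⁻¹ * (C * (z ^ (m * k))⁻¹) + (θ ^ k) ^ p * (D + (t⁻¹) ^ p * U) ^ k := by
            gcongr
        _ = C * A ^ k + E ^ k := by
            have e1 : A ^ k = (θ ^ k)⁻¹ * (z ^ (m * k))⁻¹ := by
              rw [hA, mul_pow, inv_pow, inv_pow, pow_mul]
            have e2 : E ^ k = (θ ^ k) ^ p * (D + (t⁻¹) ^ p * U) ^ k := by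
              rw [hE, mul_pow, ← pow_mul, ← pow_mul, mul_comm p k]
            rw [e1, e2]; ring
    have hlim : Tendsto (fun k : ℕ => C * (A / L) ^ k + (E / L) ^ k) atTop (𝓝 (C * 0 + 0)) := by
      refine Tendsto.add (Tendsto.const_mul _ ?_) ?_
      · exact tendsto_pow_atTop_nhds_zero_of_lt_one (by positivity) ((div_lt_one hL0).2 hAL)
      · exact tendsto_pow_atTop_nhds_zero_of_lt_one (by positivity) ((div_lt_one hL0).2 hθ)
    rw [mul_zero, add_zero] at hlim
    obtain ⟨k, hk1, hk2⟩ := ((hlim.eventually_lt_const zero_lt_one).and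
      (eventually_ge_atTop 1)).exists
    have h7 := key k hk2
    rw [div_pow, div_pow, ← mul_div_assoc, ← add_div, div_lt_one (by positivity)] at hk1
    linarith

end analytic
end QG
namespace QG
section sawlist
open Classical

variable {Q : Type*} (H : SimpleGraph Q) (hfin : ∀ x, (H.neighborSet x).Finite)

/-- list version of self-avoiding walks -/
noncomputable def Lf (n : ℕ) (x : Q) : Finset (List Q) :=
  (walks H hfin n x).filter (fun l => (x :: l).Nodup)

theorem mem_Lf (n : ℕ) (x : Q) (l : List Q) :
    l ∈ Lf H hfin n x ↔ (l.length = n ∧ List.IsChain H.Adj (x :: l)) ∧ (x :: l).Nodup := by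
  rw [Lf, Finset.mem_filter, mem_walks]

theorem support_eq {x w : Q} (p : H.Walk x w) : p.support = x :: p.support.tail := by
  cases p <;> simp

theorem sawCount_eq (n : ℕ) (x : Q) : sawCount H x n = (Lf H hfin n x).card := by
  have e : (Lf H hfin n x).card = Nat.card (Lf H hfin n x) := by simp
  rw [sawCount, e]
  have hm : ∀ p : {p : Σ w : Q, H.Walk x w // p.2.IsPath ∧ p.2.length = n},
      p.1.2.support.tail ∈ Lf H hfin n x := by
    rintro ⟨⟨w, p⟩, hp, hl⟩
    rw [mem_Lf]
    dsimp only at hp hl ⊢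
    rw [← support_eq H p]
    exact ⟨⟨by simp [hl], p.isChain_adj_support⟩, hp.support_nodup⟩
  refine Nat.card_eq_of_bijective (fun p => (⟨_, hm p⟩ : Lf H hfin n x)) ⟨?_, ?_⟩
  · rintro ⟨⟨w, p⟩, hp, hl⟩ ⟨⟨w', p'⟩, hp', hl'⟩ h
    have h : p.support.tail = p'.support.tail := congrArg Subtype.val h
    have hs : p.support = p'.support := by
      rw [support_eq H p, support_eq H p', h]
    have hw : w = w' := by
      rw [← p.getLast_support, ← p'.getLast_support]
      simp only [hs]
    subst hw
    have := SimpleGraph.Walk.ext_support hs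
    subst this
    rfl
  · rintro ⟨l, hl⟩
    have h := (mem_Lf _ _ _ _ _).1 hl
    let p := SimpleGraph.Walk.ofSupport (x :: l) (by simp) h.1.2
    have hp : p.support = x :: l := SimpleGraph.Walk.support_ofSupport _ _
    refine ⟨⟨⟨_, p⟩, ?_, ?_⟩, ?_⟩
    · rw [SimpleGraph.Walk.isPath_def]
      show p.support.Nodup
      rw [hp]; exact h.2
    · have := p.length_support
      rw [hp] at this
      simp only [List.length_cons] at this
      have := h.1.1
      show p.length = n
      omega
    · exact Subtype.ext (by show p.support.tail = l; rw [hp]; rfl)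

theorem Lf_le (e : H ≃g H) (n : ℕ) (x : Q) : (Lf H hfin n x).card ≤ (Lf H hfin n (e x)).card := by
  refine Finset.card_le_card_of_injOn (fun l => l.map e) ?_ ?_
  · intro l hl
    have hl := (mem_Lf H hfin n x l).1 hl
    refine (mem_Lf H hfin n _ _).2 ⟨?_, ?_⟩
    · have := walks_map_mem H hfin e n x l ((mem_walks _ _ _ _ _).2 hl.1)
      exact (mem_walks _ _ _ _ _).1 this
    · rw [← List.map_cons]
      exact hl.2.map e.injective
  · intro a _ b _ h
    exact List.map_injective_iff.2 e.injective h

theorem Lf_nonempty [Infinite Q] (hconn : H.Connected) (n : ℕ) (x : Q) :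
    (Lf H hfin n x).Nonempty := by
  by_contra hne
  rw [Finset.not_nonempty_iff_eq_empty] at hne
  set S := (Finset.range n).biUnion (fun k => Lf H hfin k x) with hS
  have : (Set.univ : Set Q) ⊆ (S.image (fun l => (x :: l).getLast (by simp)) : Finset Q) := by
    intro w _
    obtain ⟨p, hp⟩ := (hconn x w).exists_isPath
    have hsup := support_eq H p
    have hmem : p.support.tail ∈ Lf H hfin p.length x := by
      rw [mem_Lf, ← hsup]
      exact ⟨⟨by simp, p.isChain_adj_support⟩, hp.support_nodup⟩
    have hlt : p.length < n := by
      by_contra hge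
      push Not at hge
      have h3 := (mem_Lf _ _ _ _ _).1 hmem
      have : p.support.tail.take n ∈ Lf H hfin n x := by
        rw [mem_Lf, ← List.take_succ_cons]
        refine ⟨⟨?_, h3.1.2.take _⟩, h3.2.sublist (List.take_sublist _ _)⟩
        rw [List.length_take, h3.1.1]; omega
      rw [hne] at this; simp at this
    rw [Finset.mem_coe, Finset.mem_image]
    refine ⟨p.support.tail, ?_, ?_⟩
    · rw [hS, Finset.mem_biUnion]
      exact ⟨p.length, by simpa using hlt, hmem⟩
    · simp only [← hsup]
      simp
  exact Set.infinite_univ ((Finset.finite_toSet _).subset this)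

end sawlist
end QG
namespace QG
section cover
open Classical

variable {V Q : Type*} {G : SimpleGraph V} {H : SimpleGraph Q} {π : V → Q}

theorem lift_list (hlift : ∀ u y, H.Adj (π u) y → ∃ w, G.Adj u w ∧ π w = y) (φ : List Q) :
    ∀ v, List.IsChain H.Adj (π v :: φ) → ∃ w, List.IsChain G.Adj (v :: w) ∧ w.map π = φ := by
  induction φ with
  | nil => exact fun v _ => ⟨[], by simp⟩
  | cons y φ ih =>
    intro v h
    rw [List.isChain_cons_cons] at h
    obtain ⟨w, hw, rfl⟩ := hlift v y h.1
    obtain ⟨l, hl, rfl⟩ := ih w h.2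
    exact ⟨w :: l, by rw [List.isChain_cons_cons]; exact ⟨hw, hl⟩, rfl⟩

theorem wind_nodup {ℓ : ℕ} {cyc : Q → ℕ → Q} (hC : CycData H ℓ cyc)
    (hNC : ∀ y i (u : ℕ → V), (∀ j < ℓ, G.Adj (u j) (u (j + 1))) →
      (∀ j ≤ ℓ, π (u j) = cyc y (i + j)) → u 0 ≠ u ℓ)
    (w : List V) (hw : List.IsChain G.Adj w) (h : IsWind ℓ cyc (w.map π)) : w.Nodup := by
  obtain ⟨y, i, h, hh, e⟩ := h
  have hlen : w.length = ℓ + h + 1 := by simpa using congrArg List.length e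
  have hget : ∀ p (hp : p < w.length), π w[p] = cyc y (i + p) := by
    intro p hp
    have := congrArg (fun l => l[p]?) e
    simp [hp, hlen ▸ hp] at this
    simpa using this
  have hpos := hC.pos
  unfold List.Nodup
  rw [List.pairwise_iff_getElem]
  intro p q hp hq hpq heq
  have h1 : cyc y (i + p) = cyc y (i + q) := by rw [← hget p hp, ← hget q hq, heq]
  rw [← cyc_mod hC, ← cyc_mod hC y (i + q)] at h1
  have h2 : (i + p) % ℓ = (i + q) % ℓ :=
    hC.inj y _ _ (Nat.mod_lt _ hpos) (Nat.mod_lt _ hpos) h1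
  have h3 : ℓ ∣ (i + q) - (i + p) := (Nat.modEq_iff_dvd' (by omega)).1 h2
  obtain ⟨c, hc⟩ := h3
  have hq' : q = p + ℓ := by
    have : c = 1 := by
      have : c ≠ 0 := by rintro rfl; omega
      by_contra hne
      have : 2 ≤ c := by omega
      have : ℓ * 2 ≤ ℓ * c := Nat.mul_le_mul_left _ this
      omega
    subst this; omega
  subst hq'
  refine hNC y (i + p) (fun j => w.getD (p + j) w[p]) ?_ ?_ ?_
  · intro j hj
    have a : p + j < w.length := by omega
    have b : p + (j + 1) < w.length := by omega
    simp only [List.getD_eq_getElem _ _ a, List.getD_eq_getElem _ _ b]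
    exact (List.isChain_iff_getElem.1 hw) (p + j) b
  · intro j hj
    have a : p + j < w.length := by omega
    simp only [List.getD_eq_getElem _ _ a]
    rw [hget _ a, add_assoc]
  · have a : p + 0 < w.length := by omega
    simp only [List.getD_eq_getElem _ _ a, List.getD_eq_getElem _ _ hq]
    exact heq

theorem valid_nodup {ℓ : ℕ} {cyc : Q → ℕ → Q} (hC : CycData H ℓ cyc)
    (hNC : ∀ y i (u : ℕ → V), (∀ j < ℓ, G.Adj (u j) (u (j + 1))) →
      (∀ j ≤ ℓ, π (u j) = cyc y (i + j)) → u 0 ≠ u ℓ)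
    {M : ℕ} (dec : Q → Fin M → List Q) (κ : List (Q ⊕ (List Q × Fin M))) :
    Valid ℓ cyc dec κ → ∀ w : List V, List.IsChain G.Adj w → w.map π = out κ → w.Nodup := by
  induction κ with
  | nil => intro _ w _ h; simp [out] at h; simp [h]
  | cons a κ ih =>
    rintro ⟨hok, hd, hv⟩ w hw h
    simp only [out] at h
    obtain ⟨w1, w2, rfl, h1, h2⟩ := List.map_eq_append_iff.1 h
    rw [List.nodup_append]
    refine ⟨?_, ih hv w2 hw.right_of_append h2, ?_⟩
    · cases a with
      | inl x =>
        have : w1.length = 1 := by simpa [outI] using congrArg List.length h1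
        obtain ⟨y, rfl⟩ := List.length_eq_one_iff.1 this
        simp
      | inr p =>
        refine wind_nodup hC hNC w1 hw.left_of_append ?_
        rw [h1]; exact hok.1
    · rintro x hx _ hy rfl
      refine hd (π x) ?_ ?_
      · rw [← h1]; exact List.mem_map_of_mem hx
      · rw [← h2]; exact List.mem_map_of_mem hy

theorem count_bound (hlf : ∀ v : V, (G.neighborSet v).Finite)
    (hGt : ∀ x y, ∃ e : G ≃g G, e x = y)
    (hlift : ∀ u y, H.Adj (π u) y → ∃ w, G.Adj u w ∧ π w = y)
    {ℓ : ℕ} {cyc : Q → ℕ → Q} (hC : CycData H ℓ cyc)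
    (hNC : ∀ y i (u : ℕ → V), (∀ j < ℓ, G.Adj (u j) (u (j + 1))) →
      (∀ j ≤ ℓ, π (u j) = cyc y (i + j)) → u 0 ≠ u ℓ)
    {M : ℕ} (dec : Q → Fin M → List Q) (v : V) (N : ℕ) (S : Finset (List Q))
    (hS : ∀ φ ∈ S, φ.length = N ∧
      List.IsChain H.Adj (π v :: φ) ∧ ∃ κ : List (Q ⊕ (List Q × Fin M)),
        Valid ℓ cyc dec κ ∧ out κ = φ) :
    S.card ≤ 1 + (hlf v).toFinset.card * sawCount G v (N - 1) := by
  cases N with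
  | zero =>
    have : S ⊆ {[]} := by
      intro φ hφ
      have := (hS φ hφ).1
      simpa using this
    have := Finset.card_le_card this
    simp only [Finset.card_singleton] at this
    omega
  | succ N =>
    have : ∀ φ ∈ S, ∃ w, List.IsChain G.Adj (v :: w) ∧ w.map π = φ :=
      fun φ hφ => lift_list hlift φ v (hS φ hφ).2.1
    choose! f hf1 hf2 using this
    have hle : S.card ≤ ((hlf v).toFinset.biUnion
        (fun y => (Lf G hlf N y).image (fun l => y :: l))).card := by
      refine Finset.card_le_card_of_injOn f ?_ ?_
      · intro φ hφ
        have hφ : φ ∈ S := hφ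
        obtain ⟨h1, h2, κ, h3, h4⟩ := hS φ hφ
        have hn : (f φ).Nodup := valid_nodup hC hNC dec κ h3 (f φ) (List.isChain_cons.1 (hf1 φ hφ)).2
          ((hf2 φ hφ).trans h4.symm)
        have hl : (f φ).length = N + 1 := by
          rw [← h1, ← congrArg List.length (hf2 φ hφ), List.length_map]
        have hc := hf1 φ hφ
        rw [Finset.mem_coe, Finset.mem_biUnion]
        generalize f φ = g at hn hl hc
        cases g with
        | nil => simp at hl
        | cons y g =>
          rw [List.isChain_cons_cons] at hc
          refine ⟨y, by simpa using hc.1, Finset.mem_image.2 ⟨g, ?_, rfl⟩⟩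
          rw [mem_Lf]
          exact ⟨⟨by simpa using hl, hc.2⟩, hn⟩
      · intro a ha b hb hab
        rw [← hf2 a ha, ← hf2 b hb, hab]
    have h2 : ((hlf v).toFinset.biUnion
        (fun y => (Lf G hlf N y).image (fun l => y :: l))).card
        ≤ (hlf v).toFinset.card * sawCount G v N := by
      refine Finset.card_biUnion_le_card_mul _ _ _ fun y _ => ?_
      refine Finset.card_image_le.trans ?_
      rw [sawCount_eq G hlf]
      obtain ⟨e, he⟩ := hGt y v
      have := Lf_le G hlf e N y
      rwa [he] at this
    simp only [Nat.add_sub_cancel]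
    omega

end cover
end QG
namespace QG
section cycles
open Classical

variable {V Q : Type*} {G : SimpleGraph V} {H : SimpleGraph Q} {π : V → Q}

theorem min_cycle (hconn : G.Connected) (α : Equiv.Perm V) (hα : α ≠ 1)
    (hπα : ∀ u, π (α u) = π u) :
    ∃ (ℓ : ℕ) (f : ℕ → V), 1 ≤ ℓ ∧ (∀ j < ℓ, G.Adj (f j) (f (j + 1))) ∧ f 0 ≠ f ℓ ∧
      π (f 0) = π (f ℓ) ∧ ∀ i j, i < j → j < ℓ → π (f i) ≠ π (f j) := by
  let P : ℕ → Prop := fun n => ∃ f : ℕ → V, (∀ j < n, G.Adj (f j) (f (j + 1))) ∧ f 0 ≠ f n ∧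
      π (f 0) = π (f n)
  have hP : ∃ n, P n := by
    obtain ⟨u, hu⟩ : ∃ u, α u ≠ u := by
      by_contra h
      push Not at h
      exact hα (Equiv.ext h)
    obtain ⟨p⟩ := hconn u (α u)
    refine ⟨p.length, p.getVert, fun j hj => p.adj_getVert_succ hj, ?_, ?_⟩
    · simpa using hu.symm
    · simp [hπα]
  obtain ⟨f, hf1, hf2, hf3⟩ := Nat.find_spec hP
  have hmin := fun {r} => Nat.find_min hP (m := r)
  generalize Nat.find hP = ℓ at hf1 hf2 hf3 hmin
  refine ⟨ℓ, f, ?_, hf1, hf2, hf3, ?_⟩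
  · rcases Nat.eq_zero_or_pos ℓ with h | h
    · subst h; exact absurd rfl hf2
    · exact h
  · intro i j hij hj he
    by_cases hfe : f i = f j
    · refine hmin (r := ℓ - (j - i)) (by omega)
        ⟨fun k => if k ≤ i then f k else f (k + (j - i)), ?_, ?_, ?_⟩
      · intro k hk
        dsimp only
        rcases lt_trichotomy k i with h | h | h
        · rw [if_pos h.le, if_pos (by omega)]; exact hf1 k (by omega)
        · subst h
          rw [if_pos le_rfl, if_neg (by omega), hfe]
          have : k + 1 + (j - k) = j + 1 := by omega
          rw [this]; exact hf1 j hj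
        · rw [if_neg (by omega), if_neg (by omega)]
          have : k + 1 + (j - i) = k + (j - i) + 1 := by omega
          rw [this]; exact hf1 _ (by omega)
      · dsimp only
        rw [if_pos (Nat.zero_le _), if_neg (by omega)]
        rwa [Nat.sub_add_cancel (by omega)]
      · dsimp only
        rw [if_pos (Nat.zero_le _), if_neg (by omega)]
        rwa [Nat.sub_add_cancel (by omega)]
    · refine hmin (r := j - i) (by omega) ⟨fun k => f (i + k), ?_, ?_, ?_⟩
      · intro k hk
        exact hf1 (i + k) (by omega)
      · dsimp only
        rw [Nat.add_sub_cancel' hij.le]; exact hfe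
      · dsimp only
        rw [Nat.add_sub_cancel' hij.le]; exact he

theorem exists_cyc (hconn : G.Connected) (Γ A : Subgroup (Equiv.Perm V))
    (hΓaut : ∀ γ ∈ Γ, ∀ u w : V, G.Adj (γ u) (γ w) ↔ G.Adj u w)
    (hAΓ : A ≤ Γ)
    (hAnontriv : ∃ α ∈ A, α ≠ 1)
    (hπ : ∀ u w, π u = π w ↔ ∃ α ∈ A, α w = u)
    (hπΓ : ∀ γ ∈ Γ, ∀ u w, π (γ u) = π (γ w) ↔ π u = π w)
    (hQ : ∀ v y, ∃ γ ∈ Γ, π (γ v) = y)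
    (hadj : ∀ u w, G.Adj u w → H.Adj (π u) (π w))
    (huniq : ∀ u w w', G.Adj u w → G.Adj u w' → π w = π w' → w = w') :
    ∃ (ℓ : ℕ) (cyc : Q → ℕ → Q), CycData H ℓ cyc ∧
    (∀ y i (u : ℕ → V), (∀ j < ℓ, G.Adj (u j) (u (j + 1))) →
      (∀ j ≤ ℓ, π (u j) = cyc y (i + j)) → u 0 ≠ u ℓ) := by
  have hπA : ∀ α ∈ A, ∀ u, π (α u) = π u := fun α hα u => (hπ _ _).2 ⟨α, hα, rfl⟩
  obtain ⟨α0, hα0, hα1⟩ := hAnontriv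
  obtain ⟨ℓ, f, hpos, hf1, hf2, hf3, hf4⟩ := min_cycle (G := G) (π := π) hconn α0 hα1 (hπA α0 hα0)
  obtain ⟨α, hα, hαf⟩ := (hπ _ _).1 hf3.symm
  have hαp : ∀ q : ℕ, α ^ q ∈ A := fun q => A.pow_mem hα q
  obtain ⟨F, hF⟩ : ∃ F : ℕ → V, F = fun j => (α ^ (j / ℓ)) (f (j % ℓ)) := ⟨_, rfl⟩
  have hFπ : ∀ j, π (F j) = π (f (j % ℓ)) := by
    intro j; rw [hF]; exact hπA _ (hαp _) _
  have hFl : ∀ j, F (j + ℓ) = α (F j) := by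
    intro j
    simp only [hF]
    rw [Nat.add_div_right _ hpos, Nat.add_mod_right, pow_succ']
    rfl
  have hFadj : ∀ j, G.Adj (F j) (F (j + 1)) := by
    intro j
    have hlt : j % ℓ < ℓ := Nat.mod_lt _ hpos
    have hd := Nat.div_add_mod j ℓ
    have e1 : F j = (α ^ (j / ℓ)) (f (j % ℓ)) := by rw [hF]
    have e2 : F (j + 1) = (α ^ (j / ℓ)) (f (j % ℓ + 1)) := by
      simp only [hF]
      rcases Nat.lt_or_ge (j % ℓ + 1) ℓ with h | h
      · have h1 : (j + 1) / ℓ = j / ℓ := by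
          rw [Nat.div_eq_iff hpos]
          rw [mul_comm] at hd
          constructor <;> omega
        have h2 : (j + 1) % ℓ = j % ℓ + 1 := by
          rw [Nat.add_mod, Nat.mod_eq_of_lt (a := 1) (by omega), Nat.mod_eq_of_lt h]
        rw [h1, h2]
      · have h3 : j % ℓ + 1 = ℓ := by omega
        have h0 : j + 1 = ℓ * (j / ℓ + 1) := by rw [mul_add, mul_one]; omega
        have h1 : (j + 1) / ℓ = j / ℓ + 1 := by rw [h0, Nat.mul_div_cancel_left _ hpos]
        have h2 : (j + 1) % ℓ = 0 := by rw [h0, Nat.mul_mod_right]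
        rw [h1, h2, h3, ← hαf, pow_succ]
        rfl
    rw [e1, e2, hΓaut _ (hAΓ (hαp _))]
    exact hf1 _ hlt
  have hF0 : F 0 ≠ F ℓ := by
    have h0 : F 0 = f 0 := by simp [hF]
    have := hFl 0
    rw [Nat.zero_add, h0, hαf] at this
    rw [h0, this]; exact hf2
  choose γ hγ hγy using hQ (F 0)
  refine ⟨ℓ, fun y j => π (γ y (F j)), ⟨hpos, ?_, ?_, ?_, ?_⟩, ?_⟩
  · exact hγy
  · exact fun x i => hadj _ _ ((hΓaut _ (hγ x) _ _).2 (hFadj i))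
  · intro x i
    rw [hπΓ _ (hγ x), hFl, hπA α hα]
  · intro x i j hi hj h
    rw [hπΓ _ (hγ x), hFπ, hFπ, Nat.mod_eq_of_lt hi, Nat.mod_eq_of_lt hj] at h
    rcases lt_trichotomy i j with h1 | h1 | h1
    · exact absurd h (hf4 i j h1 hj)
    · exact h1
    · exact absurd h.symm (hf4 j i h1 hi)
  · intro y i u hu hπu h0
    obtain ⟨β, hβ, hβe⟩ := (hπ _ _).1 (hπu 0 (Nat.zero_le _))
    have key : ∀ j ≤ ℓ, u j = β (γ y (F (i + j))) := by
      intro j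
      induction j with
      | zero => intro _; exact hβe.symm
      | succ j ih =>
        intro hj
        have ih' := ih (by omega)
        refine huniq (u j) _ _ (hu j (by omega)) ?_ ?_
        · rw [ih', hΓaut _ (hAΓ hβ), hΓaut _ (hγ y)]; exact hFadj _
        · rw [hπu _ hj, hπA β hβ]
    have e1 := key ℓ le_rfl
    rw [← h0, ← hβe, Nat.add_zero] at e1
    have e2 : F i = F (i + ℓ) := (γ y).injective (β.injective e1)
    have back : ∀ k, F k = F (k + ℓ) → F 0 = F ℓ := by
      intro k
      induction k with
      | zero => intro h; simpa using h
      | succ k ih =>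
        intro h
        refine ih (huniq (F (k + 1)) _ _ (hFadj k).symm ?_ ?_)
        · rw [h]
          have := (hFadj (k + ℓ)).symm
          rwa [show k + ℓ + 1 = k + 1 + ℓ by omega] at this
        · rw [hFl, hπA α hα]
    exact hF0 (back i e2)

end cycles
end QG
namespace QG
section final
open Classical Filter Topology

theorem root_le {a q : ℝ} (ha : 0 ≤ a) (hq : 0 ≤ q) {n : ℕ} (hn : 1 ≤ n) (h : a ≤ q ^ n) :
    a ^ ((1 : ℝ) / n) ≤ q := by
  have hn0 : n ≠ 0 := by omega
  rw [one_div]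
  calc a ^ ((n : ℝ)⁻¹) ≤ (q ^ n) ^ ((n : ℝ)⁻¹) := by
        exact Real.rpow_le_rpow ha h (by positivity)
    _ = q := Real.pow_rpow_inv_natCast hq hn0

theorem le_of_root {a q : ℝ} (ha : 0 ≤ a) (hq : 0 ≤ q) {n : ℕ} (hn : 1 ≤ n)
    (h : a ^ ((1 : ℝ) / n) ≤ q) : a ≤ q ^ n := by
  have hn0 : n ≠ 0 := by omega
  rw [one_div] at h
  calc a = (a ^ ((n : ℝ)⁻¹)) ^ n := (Real.rpow_inv_natCast_pow ha hn0).symm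
    _ ≤ q ^ n := by gcongr

theorem sum_bound (s : ℕ → ℕ) (μ : ℝ) (hμ1 : 1 ≤ μ)
    (hμ : Tendsto (fun n : ℕ => (s n : ℝ) ^ ((1 : ℝ) / n)) atTop (𝓝 μ)) (Δ : ℕ)
    (z : ℝ) (hz : 0 < z) (hzμ : z * μ < 1) :
    ∃ C, ∀ K, ∑ N ∈ Finset.range K, ((1 + Δ * s (N - 1) : ℕ) : ℝ) * z ^ N ≤ C := by
  have hμ0 : 0 < μ := by linarith
  obtain ⟨q, hq1, hq2⟩ : ∃ q, μ < q ∧ q < z⁻¹ := by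
    apply exists_between
    rw [lt_inv_comm₀ hμ0 hz]
    rw [← one_div, lt_div_iff₀ hμ0]; exact hzμ
  have hq0 : 0 < q := by linarith
  have hqz : q * z < 1 := by
    have := mul_lt_mul_of_pos_right hq2 hz
    rwa [inv_mul_cancel₀ hz.ne'] at this
  have hz1 : z < 1 := by nlinarith
  have hev : ∀ᶠ n : ℕ in atTop, (s n : ℝ) ≤ q ^ n := by
    filter_upwards [hμ.eventually_lt_const hq1, eventually_ge_atTop 1] with n h1 h2
    exact le_of_root (by positivity) hq0.le h2 h1.le
  have hsum : Summable (fun n : ℕ => (s n : ℝ) * z ^ n) := by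
    refine Summable.of_norm_bounded_eventually_nat
      (summable_geometric_of_lt_one (by positivity) hqz) ?_
    filter_upwards [hev] with n hn
    rw [Real.norm_of_nonneg (by positivity), mul_pow]
    gcongr
  have hsum1 : Summable (fun N : ℕ => ((1 + Δ * s (N - 1) : ℕ) : ℝ) * z ^ N) := by
    rw [← summable_nat_add_iff 1]
    have : (fun N : ℕ => ((1 + Δ * s (N + 1 - 1) : ℕ) : ℝ) * z ^ (N + 1))
        = fun N : ℕ => z * z ^ N + (Δ * z) * ((s N : ℝ) * z ^ N) := by
      funext N
      simp only [Nat.add_sub_cancel, pow_succ]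
      push_cast; ring
    rw [this]
    exact ((summable_geometric_of_lt_one hz.le hz1).mul_left z).add (hsum.mul_left _)
  exact ⟨_, fun K => hsum1.sum_le_tsum _ (fun i _ => by positivity)⟩

theorem limsup_bound (a s : ℕ → ℕ) (hsa : ∀ n, s n ≤ a n)
    (hsub : ∀ m n, a (m + n) ≤ a m * a n) (μ : ℝ) (hμ : 1 ≤ μ) (m : ℕ) (hm : 1 ≤ m)
    (ham : (a m : ℝ) < μ ^ m) :
    limsup (fun n : ℕ => (s n : ℝ) ^ ((1 : ℝ) / n)) atTop < μ := by
  have hμ0 : 0 < μ := by linarith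
  obtain ⟨q, hq0, hqμ, hq⟩ : ∃ q : ℝ, 0 < q ∧ q < μ ∧ (a m : ℝ) < q ^ m := by
    have h1 : Tendsto (fun q : ℝ => q ^ m) (𝓝[<] μ) (𝓝 (μ ^ m)) :=
      Tendsto.mono_left ((continuous_pow m).tendsto μ) nhdsWithin_le_nhds
    have h2 : ∀ᶠ q in 𝓝[<] μ, (0:ℝ) < q :=
      eventually_nhdsWithin_of_eventually_nhds (lt_mem_nhds hμ0)
    obtain ⟨q, ⟨h3, h4⟩, h5⟩ := ((h2.and (h1.eventually_const_lt ham)).and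
      self_mem_nhdsWithin).exists
    exact ⟨q, h3, h5, h4⟩
  obtain ⟨C, hC⟩ : ∃ C : ℝ, ∀ j < m, (a j : ℝ) ≤ C * q ^ j := by
    refine ⟨∑ j ∈ Finset.range m, (a j : ℝ) / q ^ j, fun j hj => ?_⟩
    rw [← div_le_iff₀ (by positivity)]
    exact Finset.single_le_sum (f := fun j => (a j : ℝ) / q ^ j) (fun i _ => by positivity)
      (Finset.mem_range.2 hj)
  have hk : ∀ k j, j < m → (a (m * k + j) : ℝ) ≤ C * q ^ (m * k + j) := by
    intro k j hj
    induction k with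
    | zero => simpa using hC j hj
    | succ k ih =>
      have e : m * (k + 1) + j = m + (m * k + j) := by ring
      rw [e]
      calc (a (m + (m * k + j)) : ℝ) ≤ a m * a (m * k + j) := by exact_mod_cast hsub _ _
        _ ≤ q ^ m * (C * q ^ (m * k + j)) := by gcongr
        _ = _ := by rw [pow_add q m]; ring
  have hall : ∀ n, (a n : ℝ) ≤ C * q ^ n := by
    intro n
    have := hk (n / m) (n % m) (Nat.mod_lt _ hm)
    rwa [Nat.div_add_mod] at this
  obtain ⟨q', hq1, hq2⟩ := exists_between hqμ
  have hq'0 : 0 < q' := by linarith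
  have hev : ∀ᶠ n : ℕ in atTop, (s n : ℝ) ^ ((1 : ℝ) / n) ≤ q' := by
    have h1 : Tendsto (fun n : ℕ => C * (q / q') ^ n) atTop (𝓝 (C * 0)) :=
      (tendsto_pow_atTop_nhds_zero_of_lt_one (by positivity) ((div_lt_one hq'0).2 hq1)).const_mul C
    rw [mul_zero] at h1
    filter_upwards [h1.eventually_lt_const zero_lt_one, eventually_ge_atTop 1] with n h2 h3
    refine root_le (by positivity) hq'0.le h3 ?_
    rw [div_pow, ← mul_div_assoc, div_lt_one (by positivity)] at h2
    have h4 : (s n : ℝ) ≤ a n := by exact_mod_cast hsa n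
    linarith [hall n]
  refine lt_of_le_of_lt (limsup_le_of_le ?_ hev) hq2
  refine IsCoboundedUnder.of_frequently_ge (a := 0) (Frequently.of_forall fun n => by positivity)

theorem saw_le_X {Q : Type*} (H : SimpleGraph Q) (hfin : ∀ x, (H.neighborSet x).Finite)
    (B : Q → Finset Q) (R : ℕ) (hR : ∀ y, (B y).card ≤ R) (n : ℕ) (x : Q) :
    sawCount H x n ≤ (X H hfin B R n x).card := by
  rw [sawCount_eq H hfin]
  refine Finset.card_le_card ?_
  intro l hl
  have hl' := (mem_Lf _ _ _ _ _).1 hl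
  rw [X, Finset.mem_filter, mem_walks]
  refine ⟨hl'.1, (List.nodup_cons.1 hl'.2).2, fun y _ => ?_⟩
  exact (Finset.card_le_card Finset.inter_subset_left).trans (hR y)

end final
end QG
/-- Strict inequality for quotient graphs: if `𝒜` is a non-trivial normal subgroup of a
transitively acting group `Γ` of automorphisms of the infinite, connected, locally finite
graph `G`, and every SAW of length 1 or 2 has endpoints in distinct `𝒜`-orbits, then the
connective constant of `G/𝒜` is strictly smaller than that of `G`. -/
theorem quotient_graph_strict_inequality {V : Type*} (G : SimpleGraph V) [Infinite V]
    (hconn : G.Connected)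
    (hlf : ∀ v : V, (G.neighborSet v).Finite)
    (Γ A : Subgroup (Equiv.Perm V))
    (hΓaut : ∀ γ ∈ Γ, ∀ u w : V, G.Adj (γ u) (γ w) ↔ G.Adj u w)
    (hΓtrans : ∀ u w : V, ∃ γ ∈ Γ, γ u = w)
    (hAΓ : A ≤ Γ)
    (hAnormal : ∀ γ ∈ Γ, ∀ α ∈ A, γ * α * γ⁻¹ ∈ A)
    (hAnontriv : ∃ α ∈ A, α ≠ 1)
    (hL : ∀ (u w : V) (p : G.Walk u w), p.IsPath → (p.length = 1 ∨ p.length = 2) →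
      Quotient.mk (MulAction.orbitRel A V) u ≠ Quotient.mk (MulAction.orbitRel A V) w)
    (v : V) (μ : ℝ)
    (hμ : Tendsto (fun n : ℕ => (sawCount G v n : ℝ) ^ ((1 : ℝ) / n)) atTop (nhds μ)) :
    limsup (fun n : ℕ =>
      (sawCount (quotGraph G A) (Quotient.mk (MulAction.orbitRel A V) v) n : ℝ) ^ ((1 : ℝ) / n))
      atTop < μ := by
  set π : V → Quotient (MulAction.orbitRel A V) := Quotient.mk (MulAction.orbitRel A V) with hπdef
  set H := quotGraph G A with hHdef
  have hπ : ∀ u w, π u = π w ↔ ∃ α ∈ A, α w = u := by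
    intro u w
    rw [hπdef, Quotient.eq, MulAction.orbitRel_apply, MulAction.mem_orbit_iff]
    constructor
    · rintro ⟨α, h⟩
      exact ⟨α.1, α.2, h⟩
    · rintro ⟨α, hα, h⟩
      exact ⟨⟨α, hα⟩, h⟩
  have hπΓ1 : ∀ γ ∈ Γ, ∀ u w, π u = π w → π (γ u) = π (γ w) := by
    intro γ hγ u w h
    obtain ⟨α, hα, rfl⟩ := (hπ _ _).1 h
    refine (hπ _ _).2 ⟨_, hAnormal γ hγ α hα, ?_⟩
    simp
  have hπΓ : ∀ γ ∈ Γ, ∀ u w, π (γ u) = π (γ w) ↔ π u = π w := by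
    intro γ hγ u w
    refine ⟨fun h => ?_, hπΓ1 γ hγ u w⟩
    have := hπΓ1 _ (Γ.inv_mem hγ) _ _ h
    simpa using this
  have hsurj : ∀ y, ∃ u, π u = y := fun y => Quotient.exists_rep y
  have hQ : ∀ v y, ∃ γ ∈ Γ, π (γ v) = y := by
    intro v y
    obtain ⟨u, rfl⟩ := hsurj y
    obtain ⟨γ, hγ, h⟩ := hΓtrans v u
    exact ⟨γ, hγ, by rw [h]⟩
  have hne : ∀ u w, G.Adj u w → π u ≠ π w := by
    intro u w h
    refine hL u w h.toWalk ?_ (Or.inl (by simp))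
    simp [SimpleGraph.Adj.toWalk, h.ne]
  have huniq : ∀ u w w', G.Adj u w → G.Adj u w' → π w = π w' → w = w' := by
    intro u w w' h h' he
    by_contra hww
    refine hL w w' (SimpleGraph.Walk.cons h.symm h'.toWalk) ?_ (Or.inr (by simp)) he
    simp [SimpleGraph.Adj.toWalk, h'.ne, h.ne', hww]
  have hadj : ∀ u w, G.Adj u w → H.Adj (π u) (π w) := by
    intro u w h
    rw [hHdef, quotGraph, SimpleGraph.fromRel_adj]
    exact ⟨hne u w h, Or.inl ⟨u, w, h, rfl, rfl⟩⟩
  have hadj' : ∀ x y, H.Adj x y → ∃ u w, G.Adj u w ∧ π u = x ∧ π w = y := by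
    intro x y h
    rw [hHdef, quotGraph, SimpleGraph.fromRel_adj] at h
    rcases h.2 with h | ⟨u, w, h1, h2, h3⟩
    · exact h
    · exact ⟨w, u, h1.symm, h3, h2⟩
  have hlift : ∀ u y, H.Adj (π u) y → ∃ w, G.Adj u w ∧ π w = y := by
    intro u y h
    obtain ⟨u', w, h1, h2, rfl⟩ := hadj' _ _ h
    obtain ⟨α, hα, rfl⟩ := (hπ _ _).1 h2.symm
    exact ⟨α w, (hΓaut α (hAΓ hα) _ _).2 h1, (hπ _ _).2 ⟨α, hα, rfl⟩⟩
  have hHfin : ∀ x, (H.neighborSet x).Finite := by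
    intro x
    obtain ⟨u, rfl⟩ := hsurj x
    refine ((hlf u).image π).subset ?_
    intro y hy
    obtain ⟨w, hw, rfl⟩ := hlift u y hy
    exact ⟨w, hw, rfl⟩
  have hHt : ∀ x y, ∃ e : H ≃g H, e x = y := by
    intro x y
    obtain ⟨u, rfl⟩ := hsurj x
    obtain ⟨γ, hγ, rfl⟩ := hQ u y
    have hmap : ∀ γ ∈ Γ, ∃ g : Quotient (MulAction.orbitRel A V) →
        Quotient (MulAction.orbitRel A V), ∀ u, g (π u) = π (γ u) := by
      intro γ hγ
      exact ⟨Quotient.lift (fun u => π (γ u)) (fun a b h => hπΓ1 γ hγ a b (Quotient.sound h)),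
        fun u => rfl⟩
    obtain ⟨g, hg⟩ := hmap γ hγ
    obtain ⟨g', hg'⟩ := hmap γ⁻¹ (Γ.inv_mem hγ)
    have hgadj : ∀ x y, H.Adj x y → H.Adj (g x) (g y) := by
      intro x y h
      obtain ⟨a, b, hab, rfl, rfl⟩ := hadj' _ _ h
      rw [hg, hg]
      exact hadj _ _ ((hΓaut γ hγ _ _).2 hab)
    have hgadj' : ∀ x y, H.Adj x y → H.Adj (g' x) (g' y) := by
      intro x y h
      obtain ⟨a, b, hab, rfl, rfl⟩ := hadj' _ _ h
      rw [hg', hg']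
      exact hadj _ _ ((hΓaut _ (Γ.inv_mem hγ) _ _).2 hab)
    have hl : Function.LeftInverse g' g := by
      intro x
      obtain ⟨a, rfl⟩ := hsurj x
      rw [hg, hg']; simp
    have hr : Function.RightInverse g' g := by
      intro x
      obtain ⟨a, rfl⟩ := hsurj x
      rw [hg', hg]; simp
    refine ⟨⟨⟨g, g', hl, hr⟩, ?_⟩, hg u⟩
    intro a b
    refine ⟨fun h => ?_, hgadj a b⟩
    have := hgadj' _ _ h
    simpa [hl a, hl b] using this
  have hGt : ∀ x y, ∃ e : G ≃g G, e x = y := by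
    intro x y
    obtain ⟨γ, hγ, h⟩ := hΓtrans x y
    exact ⟨⟨γ, fun {a b} => hΓaut γ hγ a b⟩, h⟩
  obtain ⟨ℓ, cyc, hC, hNC⟩ := QG.exists_cyc (H := H) (π := π) hconn Γ A hΓaut hAΓ hAnontriv hπ hπΓ
    hQ hadj huniq
  have hμ1 : 1 ≤ μ := by
    refine ge_of_tendsto' hμ fun n => ?_
    refine Real.one_le_rpow ?_ (by positivity)
    rw [QG.sawCount_eq G hlf]
    exact_mod_cast (QG.Lf_nonempty G hlf hconn n v).card_pos
  obtain ⟨B, R, m, hB, hR, hm, hX⟩ := QG.core H hHfin hHt hC (π v) μ hμ1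
    (fun N => ((1 + (hlf v).toFinset.card * sawCount G v (N - 1) : ℕ) : ℝ))
    (fun z hz hzμ => QG.sum_bound (sawCount G v) μ hμ1 hμ _ z hz hzμ)
    (fun M dec N S hS => by
      exact_mod_cast QG.count_bound hlf hGt hlift hC hNC dec v N S hS)
  refine QG.limsup_bound (fun n => (QG.X H hHfin B R n (π v)).card) _ ?_ ?_ μ hμ1 m hm hX
  · intro n
    exact QG.saw_le_X H hHfin B R hR n (π v)
  · intro a b
    exact QG.X_sub H hHfin B hB hHt R a b (π v)
end
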